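/- (Prolate spheroidal double layer potential, exterior evaluation.) Fix a > 0, u₀ > 1, and integers n ≥ 0, 0 ≤ m ≤ n. Let the density be μ(s,t) = Y_n^m(s,t). Then for every exterior target point x = Φ(u,v,φ) with u > u₀, v ∈ (−1,1), φ ∈ ℝ, the double layer potential satisfies D[μ](x) = ((n−m)!/(n+m)!)·(−1)^m·(u₀^2−1)·(P_n^m)′(u₀)·Q_n^m(u)·Y_n^m(v,φ). -/

import Mathlib

noncomputable section

open Real MeasureTheory

/-- Legendre polynomial via Rodrigues' formula. -/
def legendreP (n : ℕ) (x : ℝ) : ℝ :=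
  (1 / (2 ^ n * (n.factorial : ℝ))) * iteratedDeriv n (fun y : ℝ => (y ^ 2 - 1) ^ n) x

/-- Legendre function of the second kind (Neumann's integral), for `x > 1`. -/
def legendreQ (n : ℕ) (x : ℝ) : ℝ :=
  (1 / 2) * ∫ t in (-1 : ℝ)..1, legendreP n t / (x - t)

/-- Associated Legendre function of the first kind, off the cut (`x > 1`). -/
def assocP (n m : ℕ) (x : ℝ) : ℝ :=
  Real.sqrt (x ^ 2 - 1) ^ m * iteratedDeriv m (legendreP n) x

/-- Associated Legendre function of the second kind, off the cut (`x > 1`). -/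
def assocQ (n m : ℕ) (x : ℝ) : ℝ :=
  Real.sqrt (x ^ 2 - 1) ^ m * iteratedDeriv m (legendreQ n) x

/-- Ferrers function of the first kind, on the cut (`-1 ≤ v ≤ 1`). -/
def ferrersP (n m : ℕ) (v : ℝ) : ℝ :=
  Real.sqrt (1 - v ^ 2) ^ m * iteratedDeriv m (legendreP n) v

/-- Prolate spheroidal coordinate map. -/
def prolate (a u v φ : ℝ) : EuclideanSpace ℝ (Fin 3) :=
  (WithLp.equiv 2 (Fin 3 → ℝ)).symm
    ![a * Real.sqrt (u ^ 2 - 1) * Real.sqrt (1 - v ^ 2) * Real.cos φ,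
      a * Real.sqrt (u ^ 2 - 1) * Real.sqrt (1 - v ^ 2) * Real.sin φ,
      a * u * v]

/-- Surface spheroidal (= spherical) harmonic `Y_n^m(v, φ)`. -/
def sphY (n m : ℕ) (v φ : ℝ) : ℂ :=
  ((Real.sqrt ((2 * (n : ℝ) + 1) / (4 * Real.pi)) *
      Real.sqrt (((n - m).factorial : ℝ) / ((n + m).factorial : ℝ)) * ferrersP n m v : ℝ) : ℂ) *
    Complex.exp (Complex.I * m * φ)

/-- Outward unit normal on the prolate spheroid `u = u₀`, at surface parameters `(s, t)`. -/
def unitNormalP (a u₀ s t : ℝ) : EuclideanSpace ℝ (Fin 3) :=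
  ‖deriv (fun w => prolate a w s t) u₀‖⁻¹ • deriv (fun w => prolate a w s t) u₀

/-- Surface area element on the prolate spheroid `u = u₀`. -/
def areaElemP (a u₀ s : ℝ) : ℝ := a ^ 2 * Real.sqrt (u₀ ^ 2 - s ^ 2) * Real.sqrt (u₀ ^ 2 - 1)

/-- Laplace double layer potential on the prolate spheroid `u = u₀`. -/
def doubleLayerP (a u₀ : ℝ) (μ : ℝ → ℝ → ℂ) (x : EuclideanSpace ℝ (Fin 3)) : ℂ :=
  ∫ t in (0 : ℝ)..(2 * Real.pi), ∫ s in (-1 : ℝ)..1,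
    ((((inner ℝ (unitNormalP a u₀ s t) (x - prolate a u₀ s t) : ℝ) /
        (4 * Real.pi * ‖x - prolate a u₀ s t‖ ^ 3)) * areaElemP a u₀ s : ℝ) : ℂ) * μ s t

/-
Expand the Newtonian kernel in the azimuthal angle. Integration by parts against Chebyshev
polynomials turns the `m`-th Fourier coefficient of `Z ^ (-1 / 2)`, where `Z` is the squared
distance, into that of the positive kernel `sin τ ^ (2 * m) * Z ^ (-(m + 1 / 2))`. Integrated
against `P_n^{(m)} (cos θ)` over a spheroid, this kernel satisfies the separated second order
equations in the angle `α` of the target and in the parameter `η` of the spheroid. Solutions of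
these equations that are regular at the singular point `0` are determined by their value there, so
the integral is a product of derivatives of Legendre polynomials with its value at `α = η = 0`,
where it reduces by Rodrigues' formula to a derivative of Neumann's integral for `Q_n`. The double
layer potential is the derivative in `η` of the resulting product.
-/

section LegendrePolynomials

open Polynomial

/-- The polynomial `(X² - 1)ⁿ` of Rodrigues' formula. -/
def rodrigues (n : ℕ) : ℝ[X] := (X ^ 2 - 1) ^ n

/-- The Legendre polynomial `P_n` as an element of `ℝ[X]`. -/
def legendrePoly (n : ℕ) : ℝ[X] :=
  C (1 / (2 ^ n * (n.factorial : ℝ))) * derivative^[n] (rodrigues n)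

lemma hasDerivAt_eval_iterate_derivative (p : ℝ[X]) (k : ℕ) (x : ℝ) :
    HasDerivAt (fun x => (derivative^[k] p).eval x) ((derivative^[k + 1] p).eval x) x := by
  rw [Function.iterate_succ_apply']
  exact Polynomial.hasDerivAt _ x

lemma iteratedDeriv_eval (p : ℝ[X]) (k : ℕ) :
    iteratedDeriv k (fun x => p.eval x) = fun x => (derivative^[k] p).eval x := by
  induction k with
  | zero => simp
  | succ k ih =>
    rw [iteratedDeriv_succ, ih]
    exact funext fun x => (hasDerivAt_eval_iterate_derivative p k x).deriv

lemma legendreP_eq_eval (n : ℕ) : legendreP n = fun x => (legendrePoly n).eval x := by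
  funext x
  have h : (fun y : ℝ => (y ^ 2 - 1) ^ n) = fun y => (rodrigues n).eval y := by
    simp [rodrigues]
  rw [legendreP, h, iteratedDeriv_eval, legendrePoly, eval_C_mul]

lemma iteratedDeriv_legendreP (n m : ℕ) :
    iteratedDeriv m (legendreP n) = fun x => (derivative^[m] (legendrePoly n)).eval x := by
  rw [legendreP_eq_eval, iteratedDeriv_eval]

lemma iterate_derivative_legendrePoly (n m : ℕ) :
    derivative^[m] (legendrePoly n) =
      C (1 / (2 ^ n * (n.factorial : ℝ))) * derivative^[m + n] (rodrigues n) := by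
  rw [legendrePoly, iterate_derivative_C_mul, ← Function.iterate_add_apply]

lemma eval_iterate_derivative_rodrigues_of_sq_eq_one {n i : ℕ} (hi : i < n) {x : ℝ}
    (hx : x ^ 2 = 1) : (derivative^[i] (rodrigues n)).eval x = 0 := by
  obtain ⟨q, hq⟩ := pow_sub_dvd_iterate_derivative_pow (X ^ 2 - 1 : ℝ[X]) n i
  simp [rodrigues, hq, hx, zero_pow (Nat.sub_ne_zero_of_lt hi)]

lemma rodrigues_ode (n k : ℕ) :
    (X ^ 2 - 1) * derivative^[k + 2] (rodrigues n)
      + 2 * ((k : ℝ[X]) + 1 - (n : ℝ[X])) * X * derivative^[k + 1] (rodrigues n)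
      + ((k : ℝ[X]) + 1) * ((k : ℝ[X]) - 2 * (n : ℝ[X])) * derivative^[k] (rodrigues n) = 0 := by
  induction k with
  | zero =>
    have first_order :
        (X ^ 2 - 1) * derivative (rodrigues n) = 2 * (n : ℝ[X]) * X * rodrigues n := by
      rcases n with _ | n
      · simp [rodrigues]
      · rw [rodrigues, derivative_pow_succ]
        simp only [map_add, map_natCast, map_one, derivative_sub, derivative_X_pow_succ,
          Nat.cast_one, pow_one, derivative_one, sub_zero, Nat.cast_add]
        ring
    have h := congrArg derivative first_order
    simp only [derivative_mul, derivative_sub, derivative_X_pow_succ, Nat.cast_one, map_add,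
      map_one, pow_one, derivative_one, sub_zero, derivative_ofNat, zero_mul, derivative_natCast,
      mul_zero, add_zero, derivative_X, mul_one, zero_add] at h
    simp only [zero_add, Function.iterate_succ_apply', Function.iterate_zero, id_eq, Nat.cast_zero]
    linear_combination h
  | succ k ih =>
    simp only [Function.iterate_succ_apply'] at ih ⊢
    have h := congrArg derivative ih
    simp only [derivative_mul, derivative_sub, derivative_X_pow_succ, Nat.cast_one,
      map_add, map_one, pow_one, derivative_one, sub_zero, derivative_ofNat, zero_mul,
      derivative_natCast, add_zero, sub_self, mul_zero, derivative_X, mul_one, zero_add,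
      derivative_zero] at h
    push_cast
    linear_combination h

lemma legendrePoly_ode (n m : ℕ) (x : ℝ) :
    (1 - x ^ 2) * (derivative^[m + 2] (legendrePoly n)).eval x
      - 2 * (m + 1) * x * (derivative^[m + 1] (legendrePoly n)).eval x
      + ((n : ℝ) * (n + 1) - m * (m + 1)) * (derivative^[m] (legendrePoly n)).eval x = 0 := by
  have h := congrArg (Polynomial.eval x) (rodrigues_ode n (m + n))
  simp only [eval_add, eval_sub, eval_mul, eval_pow, eval_X, eval_one, eval_natCast, eval_ofNat,
    Nat.cast_add, eval_zero] at h
  simp only [iterate_derivative_legendrePoly, eval_C_mul, add_right_comm m _ n]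
  linear_combination (-(1 / (2 ^ n * (n.factorial : ℝ)))) * h

lemma legendrePoly_eval_one (n : ℕ) : (legendrePoly n).eval 1 = 1 := by
  have factor : rodrigues n = (X + C 1) ^ n * (X - C 1) ^ n := by
    rw [rodrigues, ← mul_pow]
    congr 1
    simp only [C_1]
    ring
  have top : (derivative^[n] (rodrigues n)).eval 1 = 2 ^ n * n.factorial := by
    simp only [factor, iterate_derivative_mul, iterate_derivative_X_sub_pow, eval_finsetSum]
    rw [Finset.sum_eq_single n]
    · simp [Nat.descFactorial_self, one_add_one_eq_two]
    · intro k hk hkn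
      have hlt : k < n := lt_of_le_of_ne (Finset.mem_range_succ_iff.1 hk) hkn
      simp [zero_pow (Nat.sub_ne_zero_of_lt hlt)]
    · simp
  rw [legendrePoly, eval_C_mul, top, one_div_mul_cancel (by positivity)]

lemma iterate_derivative_legendrePoly_eval_one {n m : ℕ} (hm : m ≤ n) :
    (derivative^[m] (legendrePoly n)).eval 1
      = ((n + m).factorial : ℝ) / (2 ^ m * m.factorial * (n - m).factorial) := by
  induction m with
  | zero => simp [legendrePoly_eval_one, div_self, Nat.factorial_ne_zero]
  | succ m ih =>
    obtain ⟨d, rfl⟩ := Nat.exists_eq_add_of_le hm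
    have ode := legendrePoly_ode (m + 1 + d) m 1
    rw [ih (by omega), show m + 1 + d - m = d + 1 by omega] at ode
    rw [show m + 1 + d - (m + 1) = d by omega, ← add_assoc, eq_div_iff (by positivity)]
    simp only [Nat.factorial_succ] at ode ⊢
    push_cast at ode ⊢
    field_simp at ode
    refine mul_left_cancel₀ (by positivity : (d : ℝ) + 1 ≠ 0) ?_
    rw [add_right_comm] at ode ⊢
    linear_combination -ode

lemma derivative_sq_sub_one_pow_mul_iterate_derivative_rodrigues (n m : ℕ) :
    derivative ((X ^ 2 - 1) ^ (m + 1) * derivative^[n + m + 1] (rodrigues n))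
      = ((n : ℝ[X]) + (m : ℝ[X]) + 1) * ((n : ℝ[X]) - (m : ℝ[X]))
        * ((X ^ 2 - 1) ^ m * derivative^[n + m] (rodrigues n)) := by
  have ode := rodrigues_ode n (n + m)
  rw [derivative_mul, derivative_pow_succ, ← Function.iterate_succ_apply' derivative]
  simp only [Nat.cast_add, map_add, map_natCast, map_one, derivative_sub, derivative_X_pow_succ,
    Nat.cast_one, pow_one, derivative_one, sub_zero, Function.iterate_succ_apply'] at ode ⊢
  linear_combination (X ^ 2 - 1) ^ m * ode

lemma eq_of_derivative_eq_of_eval_eq {p q : ℝ[X]} (x : ℝ) (hd : derivative p = derivative q)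
    (hx : p.eval x = q.eval x) : p = q := by
  have h := eq_C_of_derivative_eq_zero (p := p - q) (by rw [derivative_sub, hd, sub_self])
  have hx' : (p - q).eval x = 0 := by rw [eval_sub, hx, sub_self]
  rw [h, eval_C] at hx'
  rwa [hx', C_0, sub_eq_zero] at h

lemma sq_sub_one_pow_mul_iterate_derivative_rodrigues {n m : ℕ} (hm : m ≤ n) :
    ((n - m).factorial : ℝ[X]) * ((X ^ 2 - 1) ^ m * derivative^[n + m] (rodrigues n))
      = ((n + m).factorial : ℝ[X]) * derivative^[n - m] (rodrigues n) := by
  induction m with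
  | zero => simp
  | succ m ih =>
    specialize ih (by omega)
    refine eq_of_derivative_eq_of_eval_eq 1 ?_ ?_
    · have hfac : ((n - m).factorial : ℝ[X])
          = ((n : ℝ[X]) - (m : ℝ[X])) * ((n - (m + 1)).factorial : ℝ[X]) := by
        rw [← Nat.cast_sub (by omega), ← Nat.cast_mul, ← Nat.mul_factorial_pred (by omega)]
        rfl
      rw [derivative_natCast_mul, derivative_natCast_mul, ← Function.iterate_succ_apply' derivative,
        show (n - (m + 1)).succ = n - m by omega, ← add_assoc,
        derivative_sq_sub_one_pow_mul_iterate_derivative_rodrigues, Nat.factorial_succ]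
      rw [hfac] at ih
      push_cast
      linear_combination ((n : ℝ[X]) + (m : ℝ[X]) + 1) * ih
    · simp [eval_iterate_derivative_rodrigues_of_sq_eq_one (show n - (m + 1) < n by omega)]

end LegendrePolynomials

section ParametricIntegrals

variable {E : Type*} [NormedAddCommGroup E] [NormedSpace ℝ E]

lemma hasDerivAt_setIntegral_of_continuousOn {Y : Type*} [TopologicalSpace Y] [T2Space Y]
    [SecondCountableTopology Y] [MeasurableSpace Y] [OpensMeasurableSpace Y] {μ : Measure Y}
    [IsFiniteMeasureOnCompacts μ] {S : Set Y} (hS : IsCompact S) {U : Set ℝ} (hU : IsOpen U)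
    {F F' : ℝ → Y → E} (hF : ContinuousOn (fun q : ℝ × Y => F q.1 q.2) (U ×ˢ S))
    (hF' : ContinuousOn (fun q : ℝ × Y => F' q.1 q.2) (U ×ˢ S))
    (hd : ∀ x ∈ U, ∀ y ∈ S, HasDerivAt (fun x => F x y) (F' x y) x) {x : ℝ} (hx : x ∈ U) :
    HasDerivAt (fun x => ∫ y in S, F x y ∂μ) (∫ y in S, F' x y ∂μ) x := by
  have slice {G : ℝ → Y → E} (hG : ContinuousOn (fun q : ℝ × Y => G q.1 q.2) (U ×ˢ S)) {z : ℝ}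
      (hz : z ∈ U) : ContinuousOn (G z) S :=
    hG.comp (f := fun y => (z, y)) (by fun_prop) fun y hy => ⟨hz, hy⟩
  obtain ⟨ε, hε, hball⟩ := Metric.nhds_basis_closedBall.mem_iff.1 (hU.mem_nhds hx)
  obtain ⟨C, hC⟩ := ((isCompact_closedBall x ε).prod hS).exists_bound_of_continuousOn
    (hF'.mono (Set.prod_mono hball le_rfl))
  have : IsFiniteMeasure (μ.restrict S) := ⟨by simpa using hS.measure_lt_top⟩
  refine (hasDerivAt_integral_of_dominated_loc_of_deriv_le (μ := μ.restrict S)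
    (bound := fun _ => C) (Metric.closedBall_mem_nhds x hε) ?_ ?_ ?_ ?_ ?_ ?_).2
  · filter_upwards [hU.mem_nhds hx] with z hz
    exact (slice hF hz).aestronglyMeasurable_of_isCompact hS hS.measurableSet
  · exact (slice hF hx).integrableOn_compact hS
  · exact (slice hF' hx).aestronglyMeasurable_of_isCompact hS hS.measurableSet
  · filter_upwards [ae_restrict_mem hS.measurableSet] with y hy z hz using hC (z, y) ⟨hz, hy⟩
  · exact integrable_const C
  · filter_upwards [ae_restrict_mem hS.measurableSet] with y hy z hz using hd z (hball hz) y hy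

lemma hasDerivAt_intervalIntegral_of_continuousOn {a b : ℝ} (hab : a ≤ b) {U : Set ℝ}
    (hU : IsOpen U) {F F' : ℝ → ℝ → E}
    (hF : ContinuousOn (fun q : ℝ × ℝ => F q.1 q.2) (U ×ˢ Set.Icc a b))
    (hF' : ContinuousOn (fun q : ℝ × ℝ => F' q.1 q.2) (U ×ˢ Set.Icc a b))
    (hd : ∀ x ∈ U, ∀ y ∈ Set.Icc a b, HasDerivAt (fun x => F x y) (F' x y) x) {x : ℝ}
    (hx : x ∈ U) : HasDerivAt (fun x => ∫ y in a..b, F x y) (∫ y in a..b, F' x y) x := by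
  simpa only [intervalIntegral.integral_of_le hab, ← integral_Icc_eq_integral_Ioc] using
    hasDerivAt_setIntegral_of_continuousOn (μ := volume) isCompact_Icc hU hF hF' hd hx

variable {a b c d : ℝ} {f : ℝ → ℝ → E}

lemma setIntegral_Icc_prod_Icc (hab : a ≤ b) (hcd : c ≤ d)
    (hf : ContinuousOn (fun q : ℝ × ℝ => f q.1 q.2) (Set.Icc a b ×ˢ Set.Icc c d)) :
    ∫ q in Set.Icc a b ×ˢ Set.Icc c d, f q.1 q.2 = ∫ x in a..b, ∫ y in c..d, f x y := by
  rw [Measure.volume_eq_prod, setIntegral_prod _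
    (hf.integrableOn_compact (isCompact_Icc.prod isCompact_Icc))]
  simp only [intervalIntegral.integral_of_le hab, intervalIntegral.integral_of_le hcd,
    integral_Icc_eq_integral_Ioc]

lemma setIntegral_Icc_prod_Icc_swap (hab : a ≤ b) (hcd : c ≤ d)
    (hf : ContinuousOn (fun q : ℝ × ℝ => f q.1 q.2) (Set.Icc a b ×ˢ Set.Icc c d)) :
    ∫ q in Set.Icc a b ×ˢ Set.Icc c d, f q.1 q.2 = ∫ y in c..d, ∫ x in a..b, f x y := by
  have hf' : ContinuousOn (fun q : ℝ × ℝ => f q.2 q.1) (Set.Icc c d ×ˢ Set.Icc a b) :=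
    hf.comp (f := Prod.swap) continuous_swap.continuousOn fun q hq => hq.symm
  rw [← setIntegral_Icc_prod_Icc hcd hab hf', Measure.volume_eq_prod,
    ← setIntegral_prod_swap]
  rfl

end ParametricIntegrals

section LegendreQ

open Polynomial

lemma hasDerivAt_inv_pow_succ (k : ℕ) {y : ℝ} (hy : y ≠ 0) :
    HasDerivAt (fun y => (y ^ (k + 1))⁻¹) (-((k : ℝ) + 1) * (y ^ (k + 2))⁻¹) y := by
  refine ((hasDerivAt_pow (k + 1) y).inv (pow_ne_zero _ hy)).congr_deriv ?_
  push_cast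
  field_simp
  ring_nf

lemma iteratedDeriv_legendreQ (n k : ℕ) {x : ℝ} (hx : 1 < x) :
    iteratedDeriv k (legendreQ n) x = (1 / 2) * ((-1) ^ k * k.factorial *
      ∫ t in (-1 : ℝ)..1, (legendrePoly n).eval t * ((x - t) ^ (k + 1))⁻¹) := by
  induction k generalizing x with
  | zero => simp [legendreQ, legendreP_eq_eval, div_eq_mul_inv]
  | succ k ih =>
    have hne {q : ℝ × ℝ} (hq : q ∈ Set.Ioi 1 ×ˢ Set.Icc (-1 : ℝ) 1) (j : ℕ) :
        (q.1 - q.2) ^ j ≠ 0 := pow_ne_zero _ (sub_pos.2 (hq.2.2.trans_lt hq.1)).ne'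
    have hd := hasDerivAt_intervalIntegral_of_continuousOn (by norm_num) isOpen_Ioi
      (F := fun x t => (legendrePoly n).eval t * ((x - t) ^ (k + 1))⁻¹)
      (F' := fun x t => (legendrePoly n).eval t * (-((k : ℝ) + 1) * ((x - t) ^ (k + 2))⁻¹))
      (.mul (by fun_prop) (.inv₀ (by fun_prop) fun q hq => hne hq _))
      (.mul (by fun_prop) (.mul (by fun_prop) (.inv₀ (by fun_prop) fun q hq => hne hq _)))
      (fun z hz t ht => ((hasDerivAt_inv_pow_succ k
        (sub_pos.2 (ht.2.trans_lt hz)).ne').comp_sub_const z t).const_mul _) hx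
    have ev : iteratedDeriv k (legendreQ n) =ᶠ[nhds x] fun x => (1 / 2) * ((-1) ^ k * k.factorial *
        ∫ t in (-1 : ℝ)..1, (legendrePoly n).eval t * ((x - t) ^ (k + 1))⁻¹) := by
      filter_upwards [isOpen_Ioi.mem_nhds hx] with z hz using ih hz
    rw [iteratedDeriv_succ, ev.deriv_eq, ((hd.const_mul _).const_mul _).deriv, Nat.factorial_succ]
    simp only [mul_left_comm _ (-((k : ℝ) + 1)), intervalIntegral.integral_const_mul]
    push_cast
    ring

lemma integral_iterate_derivative_mul_inv_sub_pow {F : ℝ[X]} {j : ℕ}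
    (h1 : ∀ i < j, (derivative^[i] F).eval 1 = 0) (h2 : ∀ i < j, (derivative^[i] F).eval (-1) = 0)
    {x : ℝ} (hx : 1 < x) (r : ℕ) :
    (r.factorial : ℝ) * ∫ t in (-1 : ℝ)..1, (derivative^[j] F).eval t * ((x - t) ^ (r + 1))⁻¹
      = (-1) ^ j * (r + j).factorial
        * ∫ t in (-1 : ℝ)..1, F.eval t * ((x - t) ^ (r + j + 1))⁻¹ := by
  induction j generalizing r with
  | zero => simp
  | succ j ih =>
    have hne (t : ℝ) (ht : t ∈ Set.uIcc (-1) 1) : x - t ≠ 0 := by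
      rw [Set.uIcc_of_le (by norm_num)] at ht
      linarith [ht.2]
    have hu (t : ℝ) (ht : t ∈ Set.uIcc (-1) 1) : HasDerivAt (fun t => ((x - t) ^ (r + 1))⁻¹)
        (((r : ℝ) + 1) * ((x - t) ^ (r + 1 + 1))⁻¹) t :=
      ((hasDerivAt_inv_pow_succ r (hne t ht)).comp_const_sub x t).congr_deriv (by ring)
    have hv (t : ℝ) : HasDerivAt (fun t => (derivative^[j] F).eval t)
        ((derivative^[j + 1] F).eval t) t := by
      rw [Function.iterate_succ_apply']
      exact Polynomial.hasDerivAt _ t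
    have ibp := intervalIntegral.integral_mul_deriv_eq_deriv_mul hu (fun t _ => hv t)
      (ContinuousOn.intervalIntegrable (.mul (by fun_prop) (.inv₀ (by fun_prop)
        fun t ht => pow_ne_zero _ (hne t ht))))
      (Continuous.intervalIntegrable (by fun_prop) _ _)
    simp only [h1 j j.lt_succ_self, h2 j j.lt_succ_self, mul_zero, sub_zero, zero_sub, mul_assoc,
      intervalIntegral.integral_const_mul] at ibp
    have next := ih (fun i hi => h1 i (by omega)) (fun i hi => h2 i (by omega)) (r + 1)
    simp only [mul_comm (eval _ _)] at next ⊢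
    rw [Nat.factorial_succ] at next
    push_cast at next
    rw [ibp, show r + (j + 1) = r + 1 + j by ring, pow_succ]
    linear_combination -next

lemma integral_associatedLegendre_mul_inv_sub_pow {n m : ℕ} (hm : m ≤ n) {u : ℝ} (hu : 1 < u) :
    ∫ t in (-1 : ℝ)..1, (1 - t ^ 2) ^ m * (derivative^[m] (legendrePoly n)).eval t
        * ((u - t) ^ (2 * m + 1))⁻¹
      = 2 * (-1) ^ m * (n + m).factorial / ((n - m).factorial * (2 * m).factorial)
        * iteratedDeriv m (legendreQ n) u := by
  have flip (t : ℝ) : (1 - t ^ 2) ^ m * (derivative^[m] (legendrePoly n)).eval t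
      = (-1) ^ m * (1 / (2 ^ n * n.factorial)) * ((n + m).factorial / (n - m).factorial)
        * (derivative^[n - m] (rodrigues n)).eval t := by
    have h := congrArg (Polynomial.eval t) (sq_sub_one_pow_mul_iterate_derivative_rodrigues hm)
    simp only [eval_mul, eval_natCast, eval_pow, eval_sub, eval_X, eval_one] at h
    rw [iterate_derivative_legendrePoly, eval_C_mul, add_comm m n, ← neg_sub (t ^ 2) 1,
      neg_pow (t ^ 2 - 1)]
    field_simp
    linear_combination h
  have vanish {x : ℝ} (hx : x ^ 2 = 1) (i : ℕ) (hi : i < m) :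
      (derivative^[i] (derivative^[n - m] (rodrigues n))).eval x = 0 := by
    rw [← Function.iterate_add_apply]
    exact eval_iterate_derivative_rodrigues_of_sq_eq_one (by omega) hx
  have ibp := integral_iterate_derivative_mul_inv_sub_pow (vanish (one_pow 2)) (vanish neg_one_sq)
    hu m
  rw [← Function.iterate_add_apply, Nat.add_sub_of_le hm, ← two_mul] at ibp
  simp only [flip, mul_assoc, intervalIntegral.integral_const_mul] at ibp ⊢
  simp only [iteratedDeriv_legendreQ n m hu, legendrePoly, eval_C_mul, mul_assoc,
    intervalIntegral.integral_const_mul]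
  field_simp at ibp ⊢
  rw [ibp, mul_comm _ ((-1) ^ m), ← mul_assoc, ← mul_assoc, ← mul_pow, neg_one_mul, neg_neg,
    one_pow, one_mul]

end LegendreQ

section ZonalEquation

/-- `g` solves the singular linear equation `σ g'' + k σ' g' = l σ g` on `s`. For `σ = sin` and
`σ = sinh` this is the equation of zonal functions, to which Legendre's equation for `P_n^{(m)}`
reduces with `k = 2 m + 1`. The derivative of `σ` is passed as the separate argument `σ'`. -/
def IsZonalSolution (σ σ' : ℝ → ℝ) (k l : ℝ) (s : Set ℝ) (g : ℝ → ℝ) : Prop :=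
  ∃ g' g'' : ℝ → ℝ, (∀ x ∈ s, HasDerivAt g (g' x) x) ∧ (∀ x ∈ s, HasDerivAt g' (g'' x) x) ∧
    ∀ x ∈ s, σ x * g'' x + k * σ' x * g' x = l * σ x * g x

variable {σ σ' g h : ℝ → ℝ} {k l K T : ℝ}

lemma IsZonalSolution.mono {s t : Set ℝ} (hg : IsZonalSolution σ σ' k l t g) (hst : s ⊆ t) :
    IsZonalSolution σ σ' k l s g := by
  obtain ⟨g', g'', h1, h2, h3⟩ := hg
  exact ⟨g', g'', fun x hx => h1 x (hst hx), fun x hx => h2 x (hst hx), fun x hx => h3 x (hst hx)⟩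

lemma IsZonalSolution.sub_const_mul {s : Set ℝ} (hg : IsZonalSolution σ σ' k l s g)
    (hh : IsZonalSolution σ σ' k l s h) (c : ℝ) :
    IsZonalSolution σ σ' k l s (fun x => g x - c * h x) := by
  obtain ⟨g', g'', hg1, hg2, hg3⟩ := hg
  obtain ⟨h', h'', hh1, hh2, hh3⟩ := hh
  refine ⟨fun x => g' x - c * h' x, fun x => g'' x - c * h'' x,
    fun x hx => (hg1 x hx).sub ((hh1 x hx).const_mul c),
    fun x hx => (hg2 x hx).sub ((hh2 x hx).const_mul c), fun x hx => ?_⟩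
  linear_combination hg3 x hx - c * hh3 x hx

lemma eq_zero_of_deriv_le_mul_self {f f' : ℝ → ℝ} {M : ℝ}
    (hf : ∀ x ∈ Set.Icc 0 T, HasDerivAt f (f' x) x) (h0 : f 0 = 0)
    (hpos : ∀ x ∈ Set.Icc 0 T, 0 ≤ f x) (bound : ∀ x ∈ Set.Ico 0 T, f' x ≤ M * f x) :
    ∀ x ∈ Set.Icc 0 T, f x = 0 := by
  intro x hx
  have gronwall := le_gronwallBound_of_liminf_deriv_right_le (δ := 0) (K := M) (ε := 0)
    (fun y hy => (hf y hy).continuousAt.continuousWithinAt)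
    (fun y hy _ hr =>
      (hf y (Set.Ico_subset_Icc_self hy)).hasDerivWithinAt.liminf_right_slope_le hr)
    h0.le (fun y hy => by simpa using bound y hy) x hx
  rw [gronwallBound_ε0_δ0] at gronwall
  exact le_antisymm gronwall (hpos x hx)

/- The energy `g² + g'²` grows at most exponentially, because the singular damping term `k σ'/σ`
is bounded below, and it vanishes at the singular point `0`, where the equation forces `g' = 0`. -/
lemma IsZonalSolution.eq_zero (hg : IsZonalSolution σ σ' k l (Set.Icc 0 T) g) (hk : 0 < k)
    (hσ0 : σ 0 = 0) (hσ'0 : σ' 0 ≠ 0) (hσ : ∀ x ∈ Set.Ioc 0 T, 0 < σ x)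
    (hK : ∀ x ∈ Set.Ioc 0 T, -σ' x ≤ K * σ x) (h0 : g 0 = 0) :
    ∀ x ∈ Set.Icc 0 T, g x = 0 := by
  obtain ⟨g', g'', hg, hg', ode⟩ := hg
  intro x hx
  have h0' : g' 0 = 0 := by
    have := ode 0 ⟨le_rfl, hx.1.trans hx.2⟩
    simpa [hσ0, hk.ne', hσ'0] using this
  have energy_deriv (y : ℝ) (hy : y ∈ Set.Icc 0 T) : HasDerivAt (fun x => g x ^ 2 + g' x ^ 2)
      (2 * g y * g' y + 2 * g' y * g'' y) y := by
    refine (((hg y hy).pow 2).add ((hg' y hy).pow 2)).congr_deriv ?_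
    norm_num
  have bound (y : ℝ) (hy : y ∈ Set.Ico 0 T) :
      2 * g y * g' y + 2 * g' y * g'' y ≤ (|1 + l| + 2 * k * |K|) * (g y ^ 2 + g' y ^ 2) := by
    rcases hy.1.eq_or_lt with rfl | hy0
    · simp [h0, h0']
    have hy' : y ∈ Set.Ioc 0 T := ⟨hy0, hy.2.le⟩
    have damping : g' y * g'' y ≤ l * (g y * g' y) + k * |K| * g' y ^ 2 := by
      refine le_of_mul_le_mul_left ?_ (hσ y hy')
      have hKy : -σ' y ≤ |K| * σ y :=
        (hK y hy').trans (mul_le_mul_of_nonneg_right (le_abs_self K) (hσ y hy').le)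
      have := mul_le_mul_of_nonneg_right hKy (mul_nonneg hk.le (sq_nonneg (g' y)))
      linear_combination g' y * ode y (Set.Ico_subset_Icc_self hy) + this
    have cross : 2 * ((1 + l) * (g y * g' y)) ≤ |1 + l| * (g y ^ 2 + g' y ^ 2) := by
      have h2 := mul_nonneg (sub_nonneg.2 (le_abs_self (1 + l))) (sq_nonneg (g y + g' y))
      have h3 := mul_nonneg (neg_le_iff_add_nonneg'.1 (neg_abs_le (1 + l))) (sq_nonneg (g y - g' y))
      linarith
    have : 0 ≤ k * |K| * g y ^ 2 := by positivity
    linarith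
  have := eq_zero_of_deriv_le_mul_self energy_deriv (by simp [h0, h0'])
    (fun y _ => by positivity) bound x hx
  exact pow_eq_zero_iff two_ne_zero |>.1 (by nlinarith [sq_nonneg (g x), sq_nonneg (g' x)])

lemma IsZonalSolution.eq_div_mul (hg : IsZonalSolution σ σ' k l (Set.Icc 0 T) g)
    (hh : IsZonalSolution σ σ' k l (Set.Icc 0 T) h) (hk : 0 < k) (hσ0 : σ 0 = 0)
    (hσ'0 : σ' 0 ≠ 0) (hσ : ∀ x ∈ Set.Ioc 0 T, 0 < σ x)
    (hK : ∀ x ∈ Set.Ioc 0 T, -σ' x ≤ K * σ x) (h0 : h 0 ≠ 0) :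
    ∀ x ∈ Set.Icc 0 T, g x = g 0 / h 0 * h x := fun x hx => sub_eq_zero.1 <|
  (hg.sub_const_mul hh (g 0 / h 0)).eq_zero hk hσ0 hσ'0 hσ hK
    (by rw [div_mul_cancel₀ _ h0, sub_self]) x hx

lemma IsZonalSolution.eq_div_mul_of_sin {s : Set ℝ} (hg : IsZonalSolution sin cos k l s g)
    (hh : IsZonalSolution sin cos k l s h) (hk : 0 < k) (h0 : h 0 ≠ 0) {x : ℝ} (hx : 0 < x)
    (hxπ : x < π) (hs : Set.Icc 0 x ⊆ s) : g x = g 0 / h 0 * h x := by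
  have hsin := sin_pos_of_pos_of_lt_pi hx hxπ
  refine (hg.mono hs).eq_div_mul (hh.mono hs) (K := |cos x| / sin x) hk sin_zero (by simp)
    (fun y hy => sin_pos_of_pos_of_lt_pi hy.1 (hy.2.trans_lt hxπ)) (fun y hy => ?_) h0 x
    ⟨hx.le, le_rfl⟩
  have h1 : 0 ≤ sin (x - y) :=
    sin_nonneg_of_nonneg_of_le_pi (by linarith [hy.2]) (by linarith [hy.1])
  rw [sin_sub] at h1
  have h2 := sin_pos_of_pos_of_lt_pi hy.1 (hy.2.trans_lt hxπ)
  rw [div_mul_eq_mul_div, le_div_iff₀ hsin]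
  nlinarith [neg_abs_le (cos x)]

lemma IsZonalSolution.eq_div_mul_of_sinh {s : Set ℝ} (hg : IsZonalSolution sinh cosh k l s g)
    (hh : IsZonalSolution sinh cosh k l s h) (hk : 0 < k) (h0 : h 0 ≠ 0) {x : ℝ} (hx : 0 ≤ x)
    (hs : Set.Icc 0 x ⊆ s) : g x = g 0 / h 0 * h x :=
  (hg.mono hs).eq_div_mul (hh.mono hs) (K := 0) hk sinh_zero (by simp)
    (fun _ hy => sinh_pos_iff.2 hy.1) (fun y _ => by linarith [cosh_pos y]) h0 x ⟨hx, le_rfl⟩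

variable (n m : ℕ)

lemma isZonalSolution_legendrePoly_cos :
    IsZonalSolution sin cos (2 * m + 1) (m * (m + 1) - n * (n + 1)) Set.univ
      (fun x => (Polynomial.derivative^[m] (legendrePoly n)).eval (cos x)) := by
  have hd (j : ℕ) (x : ℝ) := (hasDerivAt_eval_iterate_derivative (legendrePoly n) j (cos x)).comp x
    (hasDerivAt_cos x)
  refine ⟨_, _, fun x _ => hd m x, fun x _ => (hd (m + 1) x).mul (hasDerivAt_sin x).neg,
    fun x _ => ?_⟩
  have ode := legendrePoly_ode n m (cos x)
  rw [← sin_sq] at ode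
  simp only [Function.comp_apply]
  linear_combination sin x * ode

lemma isZonalSolution_legendrePoly_cosh :
    IsZonalSolution sinh cosh (2 * m + 1) (n * (n + 1) - m * (m + 1)) Set.univ
      (fun x => (Polynomial.derivative^[m] (legendrePoly n)).eval (cosh x)) := by
  have hd (j : ℕ) (x : ℝ) := (hasDerivAt_eval_iterate_derivative (legendrePoly n) j (cosh x)).comp x
    (hasDerivAt_cosh x)
  refine ⟨_, _, fun x _ => hd m x, fun x _ => (hd (m + 1) x).mul (hasDerivAt_sinh x),
    fun x _ => ?_⟩
  have ode := legendrePoly_ode n m (cosh x)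
  rw [show 1 - cosh x ^ 2 = -sinh x ^ 2 by rw [cosh_sq]; ring] at ode
  simp only [Function.comp_apply]
  linear_combination -sinh x * ode

end ZonalEquation

section IntegralTransform

variable {j : ℕ} {l : ℝ}

lemma integral_sin_pow_mul_zonal_mul {f f' f'' g : ℝ → ℝ}
    (hf : ∀ x ∈ Set.Icc 0 π, HasDerivAt f (f' x) x)
    (hf' : ∀ x ∈ Set.Icc 0 π, HasDerivAt f' (f'' x) x) (hf'' : ContinuousOn f'' (Set.Icc 0 π))
    (hg : IsZonalSolution sin cos (j + 1) l (Set.Icc 0 π) g) :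
    ∫ x in (0 : ℝ)..π, sin x ^ j * g x * (sin x * f'' x + (j + 1) * cos x * f' x)
      = l * ∫ x in (0 : ℝ)..π, sin x ^ (j + 1) * g x * f x := by
  obtain ⟨g', g'', hg, hg', ode⟩ := hg
  have cf : ContinuousOn f (Set.Icc 0 π) := fun x hx => (hf x hx).continuousAt.continuousWithinAt
  have cf' : ContinuousOn f' (Set.Icc 0 π) := fun x hx => (hf' x hx).continuousAt.continuousWithinAt
  have cg : ContinuousOn g (Set.Icc 0 π) := fun x hx => (hg x hx).continuousAt.continuousWithinAt
  rw [← Set.uIcc_of_le pi_pos.le] at hf hf' hg hg' ode cf cf' cg hf''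
  have hderiv (x : ℝ) (hx : x ∈ Set.uIcc 0 π) :
      HasDerivAt (fun x => sin x ^ (j + 1) * (f' x * g x - f x * g' x))
        (sin x ^ j * g x * (sin x * f'' x + (j + 1) * cos x * f' x)
          - l * (sin x ^ (j + 1) * g x * f x)) x := by
    refine (((hasDerivAt_sin x).pow (j + 1)).mul
      (((hf' x hx).mul (hg x hx)).sub ((hf x hx).mul (hg' x hx)))).congr_deriv ?_
    simp only [Nat.cast_add, Nat.cast_one, Nat.add_sub_cancel, Pi.sub_apply, Pi.mul_apply,
      Pi.pow_apply]
    linear_combination -sin x ^ j * f x * ode x hx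
  have ftc := intervalIntegral.integral_eq_sub_of_hasDerivAt hderiv
    (ContinuousOn.intervalIntegrable (by fun_prop))
  rw [intervalIntegral.integral_sub (ContinuousOn.intervalIntegrable (by fun_prop))
    (ContinuousOn.intervalIntegrable (by fun_prop)), intervalIntegral.integral_const_mul] at ftc
  simpa [sub_eq_zero] using ftc

variable {a b c : ℝ} {g : ℝ → ℝ}

/- The hypothesis `intertwine` trades the operator acting on `w` through `w₁` and `w₂` for the one
in `θ`, which `integral_sin_pow_mul_zonal_mul` moves onto `g`. -/
lemma setIntegral_sin_pow_mul_zonal_mul_of_intertwine (hab : a ≤ b) {s s' : ℝ}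
    {w w₁ w₂ d₁ d₂ : ℝ → ℝ → ℝ} {B : Set (ℝ × ℝ)} (hB : B = Set.Icc 0 π ×ˢ Set.Icc a b)
    (cw : ContinuousOn (fun q : ℝ × ℝ => w q.1 q.2) B)
    (cw₁ : ContinuousOn (fun q : ℝ × ℝ => w₁ q.1 q.2) B)
    (cw₂ : ContinuousOn (fun q : ℝ × ℝ => w₂ q.1 q.2) B)
    (cd₁ : ContinuousOn (fun q : ℝ × ℝ => d₁ q.1 q.2) B)
    (cd₂ : ContinuousOn (fun q : ℝ × ℝ => d₂ q.1 q.2) B)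
    (hd : ∀ θ τ, HasDerivAt (fun θ => w θ τ) (d₁ θ τ) θ)
    (hd₁ : ∀ θ τ, HasDerivAt (fun θ => d₁ θ τ) (d₂ θ τ) θ)
    (intertwine : ∀ θ, sin θ * ∫ τ in a..b, (s * w₂ θ τ + (j + 1) * s' * w₁ θ τ)
      = c * s * ∫ τ in a..b, (sin θ * d₂ θ τ + (j + 1) * cos θ * d₁ θ τ))
    (hg : IsZonalSolution sin cos (j + 1) l Set.univ g) (cg : Continuous g) :
    s * (∫ q in B, sin q.1 ^ (j + 1) * g q.1 * w₂ q.1 q.2)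
        + (j + 1) * s' * ∫ q in B, sin q.1 ^ (j + 1) * g q.1 * w₁ q.1 q.2
      = c * l * s * ∫ q in B, sin q.1 ^ (j + 1) * g q.1 * w q.1 q.2 := by
  have hBc : IsCompact B := hB ▸ isCompact_Icc.prod isCompact_Icc
  calc _ = ∫ q in B, sin q.1 ^ (j + 1) * g q.1
          * (s * w₂ q.1 q.2 + (j + 1) * s' * w₁ q.1 q.2) := by
        rw [← integral_const_mul, ← integral_const_mul, ← integral_add
          (ContinuousOn.integrableOn_compact hBc (by fun_prop))
          (ContinuousOn.integrableOn_compact hBc (by fun_prop))]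
        congr with q
        ring
    _ = ∫ θ in (0 : ℝ)..π, sin θ ^ j * g θ
          * (sin θ * ∫ τ in a..b, (s * w₂ θ τ + (j + 1) * s' * w₁ θ τ)) := by
        subst hB
        rw [setIntegral_Icc_prod_Icc pi_pos.le hab (by fun_prop) (f := fun θ τ =>
          sin θ ^ (j + 1) * g θ * (s * w₂ θ τ + (j + 1) * s' * w₁ θ τ))]
        simp only [intervalIntegral.integral_const_mul, pow_succ, mul_assoc, mul_left_comm (g _)]
    _ = c * s * ∫ θ in (0 : ℝ)..π, ∫ τ in a..b,
          sin θ ^ j * g θ * (sin θ * d₂ θ τ + (j + 1) * cos θ * d₁ θ τ) := by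
        simp only [intertwine, intervalIntegral.integral_const_mul, mul_left_comm _ (c * s)]
    _ = c * s * ∫ τ in a..b, ∫ θ in (0 : ℝ)..π,
          sin θ ^ j * g θ * (sin θ * d₂ θ τ + (j + 1) * cos θ * d₁ θ τ) := by
        subst hB
        rw [← setIntegral_Icc_prod_Icc pi_pos.le hab (by fun_prop) (f := fun θ τ =>
            sin θ ^ j * g θ * (sin θ * d₂ θ τ + (j + 1) * cos θ * d₁ θ τ)),
          setIntegral_Icc_prod_Icc_swap pi_pos.le hab (by fun_prop) (f := fun θ τ =>
            sin θ ^ j * g θ * (sin θ * d₂ θ τ + (j + 1) * cos θ * d₁ θ τ))]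
    _ = c * s * ∫ τ in a..b, l * ∫ θ in (0 : ℝ)..π, sin θ ^ (j + 1) * g θ * w θ τ := by
        congr 1
        refine intervalIntegral.integral_congr fun τ hτ => ?_
        rw [Set.uIcc_of_le hab] at hτ
        exact integral_sin_pow_mul_zonal_mul (fun θ _ => hd θ τ) (fun θ _ => hd₁ θ τ)
          (cd₂.comp (f := fun θ => (θ, τ)) (by fun_prop) fun θ hθ => hB ▸ ⟨hθ, hτ⟩)
          (hg.mono (Set.subset_univ _))
    _ = _ := by
        subst hB
        rw [setIntegral_Icc_prod_Icc_swap pi_pos.le hab (by fun_prop)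
          (f := fun θ τ => sin θ ^ (j + 1) * g θ * w θ τ), intervalIntegral.integral_const_mul]
        ring

lemma isZonalSolution_setIntegral {σ σ' : ℝ → ℝ} (hab : a ≤ b) {U : Set ℝ} (hU : IsOpen U)
    {W W₁ W₂ D₁ D₂ : ℝ → ℝ → ℝ → ℝ} {B : Set (ℝ × ℝ)} (hB : B = Set.Icc 0 π ×ˢ Set.Icc a b)
    (cW : ContinuousOn (fun q : ℝ × ℝ × ℝ => W q.1 q.2.1 q.2.2) (U ×ˢ B))
    (cW₁ : ContinuousOn (fun q : ℝ × ℝ × ℝ => W₁ q.1 q.2.1 q.2.2) (U ×ˢ B))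
    (cW₂ : ContinuousOn (fun q : ℝ × ℝ × ℝ => W₂ q.1 q.2.1 q.2.2) (U ×ˢ B))
    (cD₁ : ContinuousOn (fun q : ℝ × ℝ × ℝ => D₁ q.1 q.2.1 q.2.2) (U ×ˢ B))
    (cD₂ : ContinuousOn (fun q : ℝ × ℝ × ℝ => D₂ q.1 q.2.1 q.2.2) (U ×ˢ B))
    (hW : ∀ x ∈ U, ∀ θ τ, HasDerivAt (fun x => W x θ τ) (W₁ x θ τ) x)
    (hW₁ : ∀ x ∈ U, ∀ θ τ, HasDerivAt (fun x => W₁ x θ τ) (W₂ x θ τ) x)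
    (hD : ∀ x ∈ U, ∀ θ τ, HasDerivAt (fun θ => W x θ τ) (D₁ x θ τ) θ)
    (hD₁ : ∀ x ∈ U, ∀ θ τ, HasDerivAt (fun θ => D₁ x θ τ) (D₂ x θ τ) θ)
    (intertwine : ∀ x ∈ U, ∀ θ,
      sin θ * ∫ τ in a..b, (σ x * W₂ x θ τ + (j + 1) * σ' x * W₁ x θ τ)
        = c * σ x * ∫ τ in a..b, (sin θ * D₂ x θ τ + (j + 1) * cos θ * D₁ x θ τ))
    (hg : IsZonalSolution sin cos (j + 1) l Set.univ g) :
    IsZonalSolution σ σ' (j + 1) (c * l) U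
      (fun x => ∫ q in B, sin q.1 ^ (j + 1) * g q.1 * W x q.1 q.2) := by
  have cg : Continuous g := by
    obtain ⟨g', -, hg, -⟩ := hg
    exact continuous_iff_continuousAt.2 fun x => (hg x trivial).continuousAt
  have hderiv {V V' : ℝ → ℝ → ℝ → ℝ}
      (cV : ContinuousOn (fun q : ℝ × ℝ × ℝ => V q.1 q.2.1 q.2.2) (U ×ˢ B))
      (cV' : ContinuousOn (fun q : ℝ × ℝ × ℝ => V' q.1 q.2.1 q.2.2) (U ×ˢ B))
      (hV : ∀ x ∈ U, ∀ θ τ, HasDerivAt (fun x => V x θ τ) (V' x θ τ) x) (x : ℝ) (hx : x ∈ U) :=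
    hasDerivAt_setIntegral_of_continuousOn (μ := volume)
      (hB ▸ isCompact_Icc.prod isCompact_Icc) hU
      (F := fun x q => sin q.1 ^ (j + 1) * g q.1 * V x q.1 q.2)
      (F' := fun x q => sin q.1 ^ (j + 1) * g q.1 * V' x q.1 q.2)
      (by fun_prop) (by fun_prop) (fun x hx q _ => (hV x hx q.1 q.2).const_mul _) hx
  refine ⟨_, _, hderiv cW cW₁ hW, hderiv cW₁ cW₂ hW₁, fun x hx => ?_⟩
  have slice {V : ℝ → ℝ → ℝ → ℝ}
      (cV : ContinuousOn (fun q : ℝ × ℝ × ℝ => V q.1 q.2.1 q.2.2) (U ×ˢ B)) :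
      ContinuousOn (fun q : ℝ × ℝ => V x q.1 q.2) B :=
    cV.comp (f := fun q => (x, q)) (by fun_prop) fun q hq => ⟨hx, hq⟩
  exact setIntegral_sin_pow_mul_zonal_mul_of_intertwine hab hB (slice cW) (slice cW₁) (slice cW₂)
    (slice cD₁) (slice cD₂) (hD x hx) (hD₁ x hx) (intertwine x hx) hg cg

end IntegralTransform

section SquaredDistance

/-- The squared distance between two points at azimuthal difference `τ` whose prolate spheroidal
coordinates are `u = cosh β`, `v = cos α` and `u = cosh η`, `v = cos θ`, for the focal parameter
`a = 1`. In these angles it is symmetric under `β ↔ η` and under `α ↔ θ`. -/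
def sqDist (β α η θ τ : ℝ) : ℝ :=
  sinh β ^ 2 + cos α ^ 2 + (sinh η ^ 2 + cos θ ^ 2)
    - 2 * (sinh β * sin α * cos τ) * (sinh η * sin θ) - 2 * (cosh β * cos α) * (cosh η * cos θ)

/-- The derivative of `sqDist` in `η`. -/
def sqDistEta (β α η θ τ : ℝ) : ℝ :=
  2 * sinh η * cosh η - 2 * (sinh β * sin α * cos τ) * (cosh η * sin θ)
    - 2 * (cosh β * cos α) * (sinh η * cos θ)

/-- The second derivative of `sqDist` in `η`. -/
def sqDistEtaEta (β α η θ τ : ℝ) : ℝ :=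
  2 * (cosh η ^ 2 + sinh η ^ 2) - 2 * (sinh β * sin α * cos τ) * (sinh η * sin θ)
    - 2 * (cosh β * cos α) * (cosh η * cos θ)

/-- The derivative of `sqDist` in `θ`. By symmetry the derivative in `α` is the same function with
`α` and `θ` exchanged. -/
def sqDistTheta (β α η θ τ : ℝ) : ℝ :=
  -2 * cos θ * sin θ - 2 * (sinh β * sin α * cos τ) * (sinh η * cos θ)
    + 2 * (cosh β * cos α) * (cosh η * sin θ)

/-- The second derivative of `sqDist` in `θ`. -/
def sqDistThetaTheta (β α η θ τ : ℝ) : ℝ :=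
  2 * (sin θ ^ 2 - cos θ ^ 2) + 2 * (sinh β * sin α * cos τ) * (sinh η * sin θ)
    + 2 * (cosh β * cos α) * (cosh η * cos θ)

variable (β α η θ τ : ℝ)

lemma sqDist_swap : sqDist β θ η α τ = sqDist β α η θ τ := by
  unfold sqDist
  ring

lemma hasDerivAt_sqDist_eta :
    HasDerivAt (fun η => sqDist β α η θ τ) (sqDistEta β α η θ τ) η := by
  have hs := hasDerivAt_sinh η
  refine (((((hs.pow 2).add_const (cos θ ^ 2)).const_add _).sub
    ((hs.mul_const (sin θ)).const_mul _)).sub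
    (((hasDerivAt_cosh η).mul_const (cos θ)).const_mul _)).congr_deriv ?_
  simp [sqDistEta]

lemma hasDerivAt_sqDistEta :
    HasDerivAt (fun η => sqDistEta β α η θ τ) (sqDistEtaEta β α η θ τ) η := by
  have hs := hasDerivAt_sinh η
  have hc := hasDerivAt_cosh η
  refine ((((hs.const_mul 2).mul hc).sub ((hc.mul_const (sin θ)).const_mul _)).sub
    ((hs.mul_const (cos θ)).const_mul _)).congr_deriv ?_
  unfold sqDistEtaEta
  ring

lemma hasDerivAt_sqDist_theta :
    HasDerivAt (fun θ => sqDist β α η θ τ) (sqDistTheta β α η θ τ) θ := by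
  have hc := hasDerivAt_cos θ
  refine (((((hc.pow 2).const_add (sinh η ^ 2)).const_add _).sub
    (((hasDerivAt_sin θ).const_mul (sinh η)).const_mul _)).sub
    ((hc.const_mul (cosh η)).const_mul _)).congr_deriv ?_
  simp [sqDistTheta]

lemma hasDerivAt_sqDistTheta :
    HasDerivAt (fun θ => sqDistTheta β α η θ τ) (sqDistThetaTheta β α η θ τ) θ := by
  have hs := hasDerivAt_sin θ
  have hc := hasDerivAt_cos θ
  refine ((((hc.const_mul (-2)).mul hs).sub ((hc.const_mul (sinh η)).const_mul _)).add
    ((hs.const_mul (cosh η)).const_mul _)).congr_deriv ?_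
  unfold sqDistThetaTheta
  ring

lemma hasDerivAt_sqDist_tau : HasDerivAt (fun τ => sqDist β α η θ τ)
    (2 * (sinh β * sin α) * (sinh η * sin θ) * sin τ) τ := by
  refine (((((hasDerivAt_cos τ).const_mul (sinh β * sin α)).const_mul 2).mul_const
    (sinh η * sin θ)).const_sub _ |>.sub_const _).congr_deriv ?_
  ring

lemma sqDistEta_sq_add_sqDistTheta_sq :
    sqDistEta β α η θ τ ^ 2 + sqDistTheta β α η θ τ ^ 2
        + 4 * (sinh β * sin α) ^ 2 * sin τ ^ 2 * (sinh η ^ 2 + sin θ ^ 2)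
      = 4 * (sinh η ^ 2 + sin θ ^ 2) * sqDist β α η θ τ := by
  unfold sqDistEta sqDistTheta sqDist
  grind [cosh_sq β, cosh_sq η, cos_sq' α, cos_sq' θ, cos_sq' τ]

lemma sqDistEtaEta_add_sqDistThetaTheta :
    sqDistEtaEta β α η θ τ + sqDistThetaTheta β α η θ τ = 4 * (sinh η ^ 2 + sin θ ^ 2) := by
  unfold sqDistEtaEta sqDistThetaTheta
  linear_combination 2 * cosh_sq η - 2 * cos_sq' θ

lemma sin_mul_sqDistEta_add_sinh_mul_sqDistTheta :
    sin θ * cosh η * sqDistEta β α η θ τ + sinh η * cos θ * sqDistTheta β α η θ τ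
      = 2 * (sinh η ^ 2 + sin θ ^ 2) * (sinh η * sin θ - sinh β * sin α * cos τ) := by
  unfold sqDistEta sqDistTheta
  grind [cosh_sq η, cos_sq' θ]

variable {β η}

lemma sqDist_pos (h : |η| ≠ |β|) : 0 < sqDist β α η θ τ := by
  have one_lt_add : 1 < cosh (β + η) := one_lt_cosh.2 fun h0 => h <| by
    rw [eq_neg_of_add_eq_zero_left h0, abs_neg]
  have one_lt_sub : 1 < cosh (β - η) := one_lt_cosh.2 fun h0 => h <| by rw [sub_eq_zero.1 h0]
  have interpolation : sqDist β α η θ τ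
      = (1 + cos τ) / 2 * ((cosh (β + η) - cos (α + θ)) * (cosh (β - η) - cos (α - θ)))
        + (1 - cos τ) / 2 * ((cosh (β + η) - cos (α - θ)) * (cosh (β - η) - cos (α + θ))) := by
    rw [cosh_add, cosh_sub, cos_add, cos_sub, sqDist]
    grind [cosh_sq β, cosh_sq η, cos_sq' α, cos_sq' θ]
  have factor_pos {x : ℝ} (hx : 1 < x) (y : ℝ) : 0 < x - cos y := by linarith [cos_le_one y]
  have weight_add : 0 ≤ (1 + cos τ) / 2 := by linarith [neg_one_le_cos τ]
  have weight_sub : 0 ≤ (1 - cos τ) / 2 := by linarith [cos_le_one τ]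
  rw [interpolation]
  exact convex_Ioi (0 : ℝ) (mul_pos (factor_pos one_lt_add _) (factor_pos one_lt_sub _))
    (mul_pos (factor_pos one_lt_add _) (factor_pos one_lt_sub _)) weight_add weight_sub (by ring)

end SquaredDistance

section AxialKernel

/-- The derivative of `x ↦ f x ^ r` where `f x = z` and `f' x = z₁`. -/
def rpowDeriv (r z z₁ : ℝ) : ℝ :=
  r * z₁ * z ^ (r - 1)

/-- The second derivative of `x ↦ f x ^ r` where `f x = z`, `f' x = z₁` and `f'' x = z₂`. -/
def rpowDeriv₂ (r z z₁ z₂ : ℝ) : ℝ :=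
  r * z₂ * z ^ (r - 1) + r * (r - 1) * z₁ ^ 2 * z ^ (r - 2)

lemma hasDerivAt_rpow_const {f : ℝ → ℝ} {f₁ x : ℝ} (hf : HasDerivAt f f₁ x) (hx : f x ≠ 0) (r : ℝ) :
    HasDerivAt (fun x => f x ^ r) (rpowDeriv r (f x) f₁) x :=
  (hf.rpow_const (Or.inl hx)).congr_deriv (by unfold rpowDeriv; ring)

lemma hasDerivAt_rpowDeriv {f f₁ : ℝ → ℝ} {f₂ x : ℝ} (hf : HasDerivAt f (f₁ x) x)
    (hf₁ : HasDerivAt f₁ f₂ x) (hx : f x ≠ 0) (r : ℝ) :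
    HasDerivAt (fun x => rpowDeriv r (f x) (f₁ x)) (rpowDeriv₂ r (f x) (f₁ x) f₂) x := by
  refine ((hf₁.const_mul r).mul (hf.rpow_const (p := r - 1) (Or.inl hx))).congr_deriv ?_
  rw [rpowDeriv₂, sub_sub, one_add_one_eq_two]
  ring

section Continuity

variable {X : Type*} [TopologicalSpace X] {f f₁ f₂ : X → ℝ} {s : Set X}

lemma continuousOn_rpowDeriv (hf : ContinuousOn f s) (hf₁ : ContinuousOn f₁ s)
    (hs : ∀ x ∈ s, f x ≠ 0) (r : ℝ) : ContinuousOn (fun x => rpowDeriv r (f x) (f₁ x)) s :=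
  (hf₁.const_mul r).mul (hf.rpow_const fun x hx => Or.inl (hs x hx))

lemma continuousOn_rpowDeriv₂ (hf : ContinuousOn f s) (hf₁ : ContinuousOn f₁ s)
    (hf₂ : ContinuousOn f₂ s) (hs : ∀ x ∈ s, f x ≠ 0) (r : ℝ) :
    ContinuousOn (fun x => rpowDeriv₂ r (f x) (f₁ x) (f₂ x)) s :=
  (continuousOn_rpowDeriv hf hf₂ hs r).add
    ((hf₁.pow 2 |>.const_mul _).mul (hf.rpow_const fun x hx => Or.inl (hs x hx)))

end Continuity

variable {m : ℕ} {r β α η θ τ : ℝ}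

/- With `Z` the squared distance to a fixed point and `τ` the angle between the projections to the
complement of the axis, this expresses that `Z ^ r` is harmonic in dimension `2 * m + 3`. -/
lemma sqDist_rpow_laplace (hr : r = -(m + 1 / 2)) (hZ : 0 < sqDist β α η θ τ) :
    sin θ * (sinh η * rpowDeriv₂ r (sqDist β α η θ τ) (sqDistEta β α η θ τ) (sqDistEtaEta β α η θ τ)
        + (2 * m + 1) * cosh η * rpowDeriv r (sqDist β α η θ τ) (sqDistEta β α η θ τ))
      + sinh η * (sin θ * rpowDeriv₂ r (sqDist β α η θ τ) (sqDistTheta β α η θ τ)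
          (sqDistThetaTheta β α η θ τ)
        + (2 * m + 1) * cos θ * rpowDeriv r (sqDist β α η θ τ) (sqDistTheta β α η θ τ))
      + 2 * r * (sinh β * sin α) * (sinh η ^ 2 + sin θ ^ 2)
        * ((2 * m + 1) * cos τ * sqDist β α η θ τ ^ (r - 1)
          + sin τ * rpowDeriv (r - 1) (sqDist β α η θ τ)
            (2 * (sinh β * sin α) * (sinh η * sin θ) * sin τ)) = 0 := by
  have lower : sqDist β α η θ τ ^ (r - 1) = sqDist β α η θ τ ^ (r - 2) * sqDist β α η θ τ := by
    rw [← rpow_add_one hZ.ne']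
    ring_nf
  have hm : (m : ℝ) = -r - 1 / 2 := by linarith
  simp only [rpowDeriv, rpowDeriv₂, sub_sub, one_add_one_eq_two, lower, hm]
  linear_combination
    r * (r - 1) * sqDist β α η θ τ ^ (r - 2) * sin θ * sinh η
      * sqDistEta_sq_add_sqDistTheta_sq β α η θ τ
    + r * sqDist β α η θ τ ^ (r - 2) * sqDist β α η θ τ * sin θ * sinh η
      * sqDistEtaEta_add_sqDistThetaTheta β α η θ τ
    - 2 * r ^ 2 * sqDist β α η θ τ ^ (r - 2) * sqDist β α η θ τ
      * sin_mul_sqDistEta_add_sinh_mul_sqDistTheta β α η θ τ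

variable (m β α η θ τ)

/-- The kernel `sin τ ^ (2 * m) * Z ^ (-(m + 1 / 2))`, with `Z = sqDist β α η θ τ`. Its integral
over `τ` is, up to a constant, the Newtonian potential of the orbit of a point under the rotations
about the axis in a Euclidean space of dimension `2 * m + 3`. -/
def axialKernel : ℝ :=
  sin τ ^ (2 * m) * sqDist β α η θ τ ^ (-(m + 1 / 2) : ℝ)

/-- The derivative of `axialKernel` in `η`. -/
def axialKernelEta : ℝ :=
  sin τ ^ (2 * m) * rpowDeriv (-(m + 1 / 2)) (sqDist β α η θ τ) (sqDistEta β α η θ τ)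

/-- The second derivative of `axialKernel` in `η`. -/
def axialKernelEtaEta : ℝ :=
  sin τ ^ (2 * m) * rpowDeriv₂ (-(m + 1 / 2)) (sqDist β α η θ τ) (sqDistEta β α η θ τ)
    (sqDistEtaEta β α η θ τ)

/-- The derivative of `axialKernel` in `θ`. -/
def axialKernelTheta : ℝ :=
  sin τ ^ (2 * m) * rpowDeriv (-(m + 1 / 2)) (sqDist β α η θ τ) (sqDistTheta β α η θ τ)

/-- The second derivative of `axialKernel` in `θ`. -/
def axialKernelThetaTheta : ℝ :=
  sin τ ^ (2 * m) * rpowDeriv₂ (-(m + 1 / 2)) (sqDist β α η θ τ) (sqDistTheta β α η θ τ)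
    (sqDistThetaTheta β α η θ τ)

lemma axialKernel_swap : axialKernel m β θ η α τ = axialKernel m β α η θ τ := by
  rw [axialKernel, sqDist_swap, axialKernel]

variable {m β α η θ τ}

lemma hasDerivAt_axialKernel_eta (hZ : sqDist β α η θ τ ≠ 0) :
    HasDerivAt (fun η => axialKernel m β α η θ τ) (axialKernelEta m β α η θ τ) η :=
  (hasDerivAt_rpow_const (hasDerivAt_sqDist_eta β α η θ τ) hZ _).const_mul _

lemma hasDerivAt_axialKernelEta (hZ : sqDist β α η θ τ ≠ 0) :
    HasDerivAt (fun η => axialKernelEta m β α η θ τ) (axialKernelEtaEta m β α η θ τ) η :=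
  (hasDerivAt_rpowDeriv (hasDerivAt_sqDist_eta β α η θ τ) (hasDerivAt_sqDistEta β α η θ τ)
    hZ _).const_mul _

lemma hasDerivAt_axialKernel_theta (hZ : sqDist β α η θ τ ≠ 0) :
    HasDerivAt (fun θ => axialKernel m β α η θ τ) (axialKernelTheta m β α η θ τ) θ :=
  (hasDerivAt_rpow_const (hasDerivAt_sqDist_theta β α η θ τ) hZ _).const_mul _

lemma hasDerivAt_axialKernelTheta (hZ : sqDist β α η θ τ ≠ 0) :
    HasDerivAt (fun θ => axialKernelTheta m β α η θ τ) (axialKernelThetaTheta m β α η θ τ) θ :=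
  (hasDerivAt_rpowDeriv (hasDerivAt_sqDist_theta β α η θ τ) (hasDerivAt_sqDistTheta β α η θ τ)
    hZ _).const_mul _

section Continuity

variable {X : Type*} [TopologicalSpace X] {A N T P : X → ℝ} {s : Set X}

lemma continuousOn_axialKernel (hA : Continuous A) (hN : Continuous N) (hT : Continuous T)
    (hP : Continuous P) (hs : ∀ x ∈ s, sqDist β (A x) (N x) (T x) (P x) ≠ 0) :
    ContinuousOn (fun x => axialKernel m β (A x) (N x) (T x) (P x)) s :=
  ContinuousOn.mul (by fun_prop)
    (ContinuousOn.rpow_const (by unfold sqDist; fun_prop) fun x hx => Or.inl (hs x hx))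

lemma continuousOn_axialKernelEta (hA : Continuous A) (hN : Continuous N) (hT : Continuous T)
    (hP : Continuous P) (hs : ∀ x ∈ s, sqDist β (A x) (N x) (T x) (P x) ≠ 0) :
    ContinuousOn (fun x => axialKernelEta m β (A x) (N x) (T x) (P x)) s :=
  ContinuousOn.mul (by fun_prop) (continuousOn_rpowDeriv (by unfold sqDist; fun_prop)
    (by unfold sqDistEta; fun_prop) hs _)

lemma continuousOn_axialKernelEtaEta (hA : Continuous A) (hN : Continuous N) (hT : Continuous T)
    (hP : Continuous P) (hs : ∀ x ∈ s, sqDist β (A x) (N x) (T x) (P x) ≠ 0) :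
    ContinuousOn (fun x => axialKernelEtaEta m β (A x) (N x) (T x) (P x)) s :=
  ContinuousOn.mul (by fun_prop) (continuousOn_rpowDeriv₂ (by unfold sqDist; fun_prop)
    (by unfold sqDistEta; fun_prop) (by unfold sqDistEtaEta; fun_prop) hs _)

lemma continuousOn_axialKernelTheta (hA : Continuous A) (hN : Continuous N) (hT : Continuous T)
    (hP : Continuous P) (hs : ∀ x ∈ s, sqDist β (A x) (N x) (T x) (P x) ≠ 0) :
    ContinuousOn (fun x => axialKernelTheta m β (A x) (N x) (T x) (P x)) s :=
  ContinuousOn.mul (by fun_prop) (continuousOn_rpowDeriv (by unfold sqDist; fun_prop)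
    (by unfold sqDistTheta; fun_prop) hs _)

lemma continuousOn_axialKernelThetaTheta (hA : Continuous A) (hN : Continuous N)
    (hT : Continuous T) (hP : Continuous P)
    (hs : ∀ x ∈ s, sqDist β (A x) (N x) (T x) (P x) ≠ 0) :
    ContinuousOn (fun x => axialKernelThetaTheta m β (A x) (N x) (T x) (P x)) s :=
  ContinuousOn.mul (by fun_prop) (continuousOn_rpowDeriv₂ (by unfold sqDist; fun_prop)
    (by unfold sqDistTheta; fun_prop) (by unfold sqDistThetaTheta; fun_prop) hs _)

end Continuity

lemma hasDerivAt_axialKernel_laplace (hZ : 0 < sqDist β α η θ τ) : HasDerivAt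
    (fun τ => 2 * (m + 1 / 2) * (sinh β * sin α) * (sinh η ^ 2 + sin θ ^ 2)
      * (sin τ ^ (2 * m + 1) * sqDist β α η θ τ ^ (-(m + 1 / 2) - 1 : ℝ)))
    (sin θ * (sinh η * axialKernelEtaEta m β α η θ τ
        + ((2 * m : ℕ) + 1) * cosh η * axialKernelEta m β α η θ τ)
      + sinh η * (sin θ * axialKernelThetaTheta m β α η θ τ
        + ((2 * m : ℕ) + 1) * cos θ * axialKernelTheta m β α η θ τ)) τ := by
  refine ((((hasDerivAt_sin τ).pow (2 * m + 1)).mul (hasDerivAt_rpow_const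
    (hasDerivAt_sqDist_tau β α η θ τ) hZ.ne' _)).const_mul _).congr_deriv ?_
  have laplace := sqDist_rpow_laplace (m := m) rfl hZ
  simp only [axialKernelEta, axialKernelEtaEta, axialKernelTheta, axialKernelThetaTheta,
    Pi.pow_apply, Nat.add_sub_cancel, pow_succ (sin τ) (2 * m)]
  push_cast
  linear_combination -sin τ ^ (2 * m) * laplace

lemma integral_axialKernel_laplace (hZ : ∀ τ, 0 < sqDist β α η θ τ) :
    sin θ * ∫ τ in (0 : ℝ)..2 * π, (sinh η * axialKernelEtaEta m β α η θ τ
        + ((2 * m : ℕ) + 1) * cosh η * axialKernelEta m β α η θ τ)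
      = -1 * sinh η * ∫ τ in (0 : ℝ)..2 * π, (sin θ * axialKernelThetaTheta m β α η θ τ
        + ((2 * m : ℕ) + 1) * cos θ * axialKernelTheta m β α η θ τ) := by
  have hs (τ : ℝ) (_ : τ ∈ Set.uIcc 0 (2 * π)) : sqDist β α η θ τ ≠ 0 := (hZ τ).ne'
  have cEta := continuousOn_axialKernelEta (m := m) continuous_const continuous_const
    continuous_const continuous_id hs
  have cEtaEta := continuousOn_axialKernelEtaEta (m := m) continuous_const continuous_const
    continuous_const continuous_id hs
  have cTheta := continuousOn_axialKernelTheta (m := m) continuous_const continuous_const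
    continuous_const continuous_id hs
  have cThetaTheta := continuousOn_axialKernelThetaTheta (m := m) continuous_const continuous_const
    continuous_const continuous_id hs
  have ftc := intervalIntegral.integral_eq_sub_of_hasDerivAt
    (fun τ _ => hasDerivAt_axialKernel_laplace (m := m) (hZ τ))
    (ContinuousOn.intervalIntegrable (by fun_prop))
  rw [intervalIntegral.integral_add (ContinuousOn.intervalIntegrable (by fun_prop))
      (ContinuousOn.intervalIntegrable (by fun_prop)), intervalIntegral.integral_const_mul,
    intervalIntegral.integral_const_mul, sin_zero, sin_two_pi, sub_eq_zero.2 (by simp)] at ftc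
  linear_combination ftc

/- Both sides are proportional to the integral of the operator in `η`, the first after exchanging
`α` and `θ`. -/
lemma integral_axialKernel_alpha_eq_theta (hη : η ≠ 0) (hZ : ∀ α θ τ, 0 < sqDist β α η θ τ) :
    sin θ * ∫ τ in (0 : ℝ)..2 * π, (sin α * axialKernelThetaTheta m β θ η α τ
        + ((2 * m : ℕ) + 1) * cos α * axialKernelTheta m β θ η α τ)
      = 1 * sin α * ∫ τ in (0 : ℝ)..2 * π, (sin θ * axialKernelThetaTheta m β α η θ τ
        + ((2 * m : ℕ) + 1) * cos θ * axialKernelTheta m β α η θ τ) := by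
  have swap : ∫ τ in (0 : ℝ)..2 * π, (sinh η * axialKernelEtaEta m β θ η α τ
        + ((2 * m : ℕ) + 1) * cosh η * axialKernelEta m β θ η α τ)
      = ∫ τ in (0 : ℝ)..2 * π, (sinh η * axialKernelEtaEta m β α η θ τ
        + ((2 * m : ℕ) + 1) * cosh η * axialKernelEta m β α η θ τ) := by
    have eta : sqDistEta β θ η α = sqDistEta β α η θ := by ext; unfold sqDistEta; ring
    have etaEta : sqDistEtaEta β θ η α = sqDistEtaEta β α η θ := by ext; unfold sqDistEtaEta; ring
    simp only [axialKernelEta, axialKernelEtaEta, sqDist_swap, eta, etaEta]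
  have hsinh : sinh η ≠ 0 := sinh_ne_zero.2 hη
  have laplace := integral_axialKernel_laplace (m := m) (hZ α θ)
  have laplace_swap := integral_axialKernel_laplace (m := m) (hZ θ α)
  rw [swap] at laplace_swap
  refine mul_left_cancel₀ hsinh ?_
  linear_combination sin θ * laplace_swap - sin α * laplace

end AxialKernel

section AxialIntegral

open Polynomial (derivative)

/-- The integral of `axialKernel` against `P_n^{(m)} (cos θ)` with the weight
`sin θ ^ (2 * m + 1)`. -/
def axialIntegral (n m : ℕ) (β α η : ℝ) : ℝ :=
  ∫ q in Set.Icc 0 π ×ˢ Set.Icc 0 (2 * π), sin q.1 ^ (2 * m + 1)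
    * (derivative^[m] (legendrePoly n)).eval (cos q.1) * axialKernel m β α η q.1 q.2

variable (n m : ℕ) {β η : ℝ}

lemma isZonalSolution_axialIntegral_alpha (hη : η ≠ 0) (hβ : |η| ≠ |β|) :
    IsZonalSolution sin cos (2 * m + 1) (m * (m + 1) - n * (n + 1)) Set.univ
      (fun α => axialIntegral n m β α η) := by
  have cast : ((2 * m : ℕ) : ℝ) + 1 = 2 * m + 1 := by push_cast; rfl
  have hZ (α θ τ : ℝ) := sqDist_pos α θ τ hβ
  have in_alpha (α θ τ : ℝ) : HasDerivAt (fun α => axialKernel m β α η θ τ)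
      (axialKernelTheta m β θ η α τ) α := by
    simpa only [axialKernel_swap m β θ η] using
      hasDerivAt_axialKernel_theta (m := m) (hZ θ α τ).ne'
  rw [← cast, ← one_mul ((m : ℝ) * (m + 1) - n * (n + 1))]
  refine isZonalSolution_setIntegral two_pi_pos.le isOpen_univ rfl
    (W := fun α θ τ => axialKernel m β α η θ τ)
    (W₁ := fun α θ τ => axialKernelTheta m β θ η α τ)
    (W₂ := fun α θ τ => axialKernelThetaTheta m β θ η α τ)
    (D₁ := fun α θ τ => axialKernelTheta m β α η θ τ)
    (D₂ := fun α θ τ => axialKernelThetaTheta m β α η θ τ)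
    (continuousOn_axialKernel ?_ ?_ ?_ ?_ fun q _ => (hZ _ _ _).ne')
    (continuousOn_axialKernelTheta ?_ ?_ ?_ ?_ fun q _ => (hZ _ _ _).ne')
    (continuousOn_axialKernelThetaTheta ?_ ?_ ?_ ?_ fun q _ => (hZ _ _ _).ne')
    (continuousOn_axialKernelTheta ?_ ?_ ?_ ?_ fun q _ => (hZ _ _ _).ne')
    (continuousOn_axialKernelThetaTheta ?_ ?_ ?_ ?_ fun q _ => (hZ _ _ _).ne')
    (fun α _ => in_alpha α) (fun α _ θ τ => hasDerivAt_axialKernelTheta (hZ _ _ _).ne')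
    (fun α _ θ τ => hasDerivAt_axialKernel_theta (hZ _ _ _).ne')
    (fun α _ θ τ => hasDerivAt_axialKernelTheta (hZ _ _ _).ne')
    (fun α _ θ => integral_axialKernel_alpha_eq_theta hη hZ)
    (cast ▸ isZonalSolution_legendrePoly_cos n m)
  all_goals fun_prop

lemma isZonalSolution_axialIntegral_eta (β α : ℝ) :
    IsZonalSolution sinh cosh (2 * m + 1) (n * (n + 1) - m * (m + 1)) (Set.Ioo (-|β|) |β|)
      (axialIntegral n m β α) := by
  have cast : ((2 * m : ℕ) : ℝ) + 1 = 2 * m + 1 := by push_cast; rfl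
  have hZ (η : ℝ) (hη : η ∈ Set.Ioo (-|β|) |β|) (θ τ : ℝ) :=
    sqDist_pos α θ τ (abs_lt.2 hη).ne
  rw [← cast, show (n : ℝ) * (n + 1) - m * (m + 1) = -1 * (m * (m + 1) - n * (n + 1)) by ring]
  refine isZonalSolution_setIntegral two_pi_pos.le isOpen_Ioo rfl
    (W := axialKernel m β α) (W₁ := axialKernelEta m β α) (W₂ := axialKernelEtaEta m β α)
    (D₁ := axialKernelTheta m β α) (D₂ := axialKernelThetaTheta m β α)
    (continuousOn_axialKernel ?_ ?_ ?_ ?_ fun q hq => (hZ _ hq.1 _ _).ne')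
    (continuousOn_axialKernelEta ?_ ?_ ?_ ?_ fun q hq => (hZ _ hq.1 _ _).ne')
    (continuousOn_axialKernelEtaEta ?_ ?_ ?_ ?_ fun q hq => (hZ _ hq.1 _ _).ne')
    (continuousOn_axialKernelTheta ?_ ?_ ?_ ?_ fun q hq => (hZ _ hq.1 _ _).ne')
    (continuousOn_axialKernelThetaTheta ?_ ?_ ?_ ?_ fun q hq => (hZ _ hq.1 _ _).ne')
    (fun η hη θ τ => hasDerivAt_axialKernel_eta (hZ η hη θ τ).ne')
    (fun η hη θ τ => hasDerivAt_axialKernelEta (hZ η hη θ τ).ne')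
    (fun η hη θ τ => hasDerivAt_axialKernel_theta (hZ η hη θ τ).ne')
    (fun η hη θ τ => hasDerivAt_axialKernelTheta (hZ η hη θ τ).ne')
    (fun η hη θ => integral_axialKernel_laplace (hZ η hη θ))
    (cast ▸ isZonalSolution_legendrePoly_cos n m)
  all_goals fun_prop

lemma integral_sin_smul_comp_cos {E : Type*} [NormedAddCommGroup E] [NormedSpace ℝ E] {g : ℝ → E}
    (hg : ContinuousOn g (Set.Icc (-1) 1)) :
    ∫ θ in (0 : ℝ)..π, sin θ • g (cos θ) = ∫ t in (-1 : ℝ)..1, g t := by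
  have subst := intervalIntegral.integral_deriv_smul_comp' (a := 0) (b := π) (f := cos)
    (f' := fun x => -sin x) (fun x _ => hasDerivAt_cos x) (by fun_prop)
    (hg.mono (Set.image_subset_iff.2 fun x _ => cos_mem_Icc x))
  simp only [Function.comp_apply, cos_zero, cos_pi, neg_smul, intervalIntegral.integral_neg]
    at subst
  rw [intervalIntegral.integral_symm 1 (-1), ← subst, neg_neg]

lemma integral_sin_pow_two_mul : ∫ τ in (0 : ℝ)..2 * π, sin τ ^ (2 * m)
    = 2 * π * (2 * m).factorial / (4 ^ m * (m.factorial : ℝ) ^ 2) := by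
  induction m with
  | zero => simp
  | succ k ih =>
    rw [show 2 * (k + 1) = 2 * k + 2 by ring, integral_sin_pow, ih]
    simp only [sin_zero, sin_two_pi, Nat.factorial_succ]
    have := Nat.factorial_ne_zero k
    push_cast
    field_simp
    ring

lemma axialKernel_zero_zero (hβ : β ≠ 0) (θ τ : ℝ) :
    axialKernel m β 0 0 θ τ = sin τ ^ (2 * m) * ((cosh β - cos θ) ^ (2 * m + 1))⁻¹ := by
  have pos : 0 < cosh β - cos θ := by linarith [one_lt_cosh.2 hβ, cos_le_one θ]
  have sq : sqDist β 0 0 θ τ = (cosh β - cos θ) ^ 2 := by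
    simp only [sqDist, sinh_zero, sin_zero, cosh_zero, cos_zero]
    linear_combination -cosh_sq β
  have half : ((cosh β - cos θ) ^ 2) ^ ((m : ℝ) + 1 / 2) = (cosh β - cos θ) ^ (2 * m + 1) := by
    rw [← rpow_natCast, ← rpow_natCast, ← rpow_mul pos.le]
    push_cast
    ring_nf
  rw [axialKernel, sq, rpow_neg (by positivity), half]

variable {n m}

lemma axialIntegral_zero_zero (hm : m ≤ n) (hβ : 0 < β) : axialIntegral n m β 0 0
    = 4 * π * (-1) ^ m * (n + m).factorial / (4 ^ m * (m.factorial : ℝ) ^ 2 * (n - m).factorial)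
      * iteratedDeriv m (legendreQ n) (cosh β) := by
  have cK : ContinuousOn (fun q : ℝ × ℝ => sin q.1 ^ (2 * m + 1)
      * (derivative^[m] (legendrePoly n)).eval (cos q.1) * axialKernel m β 0 0 q.1 q.2)
      (Set.Icc 0 π ×ˢ Set.Icc 0 (2 * π)) := by
    refine ContinuousOn.mul (by fun_prop) (continuousOn_axialKernel ?_ ?_ ?_ ?_ fun q _ =>
      (sqDist_pos _ _ _ (by rw [abs_zero]; exact (abs_pos.2 hβ.ne').ne)).ne') <;> fun_prop
  have cg : ContinuousOn (fun t : ℝ => (1 - t ^ 2) ^ m * (derivative^[m] (legendrePoly n)).eval t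
      * ((cosh β - t) ^ (2 * m + 1))⁻¹) (Set.Icc (-1) 1) := by
    refine ContinuousOn.mul (by fun_prop) (ContinuousOn.inv₀ (by fun_prop) fun t ht => ?_)
    have := one_lt_cosh.2 hβ.ne'
    exact pow_ne_zero _ (by linarith [ht.2])
  calc axialIntegral n m β 0 0
      = ∫ θ in (0 : ℝ)..π, (∫ τ in (0 : ℝ)..2 * π, sin τ ^ (2 * m)) * (sin θ •
          ((1 - cos θ ^ 2) ^ m * (derivative^[m] (legendrePoly n)).eval (cos θ)
            * ((cosh β - cos θ) ^ (2 * m + 1))⁻¹)) := by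
        rw [axialIntegral, setIntegral_Icc_prod_Icc pi_pos.le two_pi_pos.le cK (f := fun θ τ =>
          sin θ ^ (2 * m + 1) * (derivative^[m] (legendrePoly n)).eval (cos θ)
            * axialKernel m β 0 0 θ τ)]
        refine intervalIntegral.integral_congr fun θ _ => ?_
        simp only [axialKernel_zero_zero m hβ.ne', intervalIntegral.integral_const_mul,
          intervalIntegral.integral_mul_const, ← sin_sq, ← pow_mul, smul_eq_mul]
        ring
    _ = 2 * π * (2 * m).factorial / (4 ^ m * (m.factorial : ℝ) ^ 2)
          * (2 * (-1) ^ m * (n + m).factorial / ((n - m).factorial * (2 * m).factorial)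
            * iteratedDeriv m (legendreQ n) (cosh β)) := by
        rw [intervalIntegral.integral_const_mul, integral_sin_pow_two_mul,
          integral_sin_smul_comp_cos cg,
          integral_associatedLegendre_mul_inv_sub_pow hm (one_lt_cosh.2 hβ.ne')]
    _ = _ := by
        field_simp
        ring

lemma axialIntegral_eq (hm : m ≤ n) {α : ℝ} (hα : α ∈ Set.Ioo 0 π) (hη : 0 < η) (hβ : η < β) :
    axialIntegral n m β α η = 4 * π * (-1) ^ m * ((n - m).factorial / (n + m).factorial)
      * (derivative^[m] (legendrePoly n)).eval (cosh η)
      * (derivative^[m] (legendrePoly n)).eval (cos α)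
      * iteratedDeriv m (legendreQ n) (cosh β) := by
  have hβ0 := hη.trans hβ
  have hpos : (derivative^[m] (legendrePoly n)).eval 1 ≠ 0 := by
    rw [iterate_derivative_legendrePoly_eval_one hm]
    positivity
  have in_alpha := (isZonalSolution_axialIntegral_alpha n m (β := β) hη.ne'
    (by rw [abs_of_pos hη, abs_of_pos hβ0]; exact hβ.ne)).eq_div_mul_of_sin
    (isZonalSolution_legendrePoly_cos n m) (by positivity) (by rwa [cos_zero]) hα.1 hα.2
    (Set.subset_univ _)
  have in_eta := (isZonalSolution_axialIntegral_eta n m β 0).eq_div_mul_of_sinh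
    ((isZonalSolution_legendrePoly_cosh n m).mono (Set.subset_univ _)) (by positivity)
    (by rwa [cosh_zero]) hη.le fun y hy => by
      rw [abs_of_pos hβ0]
      exact ⟨by linarith [hy.1], by linarith [hy.2]⟩
  rw [cos_zero] at in_alpha
  rw [cosh_zero] at in_eta
  rw [in_alpha, in_eta, axialIntegral_zero_zero hm hβ0,
    iterate_derivative_legendrePoly_eval_one hm, show (4 : ℝ) ^ m = 2 ^ m * 2 ^ m by
      rw [← mul_pow]; norm_num]
  field_simp

end AxialIntegral

section FourierModes

open Complex (I)
open Polynomial (derivative)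

lemma integral_comp_sub_mul_exp (m : ℕ) (φ : ℝ) {g : ℝ → ℝ} (hg : Continuous g)
    (hper : Function.Periodic g (2 * π)) (heven : Function.Even g) :
    ∫ t in (0 : ℝ)..2 * π, (g (t - φ) : ℂ) * Complex.exp (I * m * t)
      = Complex.exp (I * m * φ) * (∫ t in (0 : ℝ)..2 * π, cos (m * t) * g t : ℝ) := by
  have split (t : ℝ) : (g t : ℂ) * Complex.exp (I * m * (t + φ : ℝ))
      = Complex.exp (I * m * φ) * ((cos (m * t) * g t : ℝ) + (sin (m * t) * g t : ℝ) * I) := by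
    rw [show I * m * (t + φ : ℝ) = I * m * φ + (m * t : ℝ) * I by push_cast; ring,
      Complex.exp_add, Complex.exp_mul_I]
    push_cast
    ring
  have per :
      Function.Periodic (fun t : ℝ => (g t : ℂ) * Complex.exp (I * m * (t + φ : ℝ))) (2 * π) := by
    intro t
    simp only [split]
    rw [hper t, mul_add (m : ℝ), sin_add_nat_mul_two_pi, cos_add_nat_mul_two_pi]
  have odd : ∫ t in (0 : ℝ)..2 * π, sin (m * t) * g t = 0 := by
    have reflect := intervalIntegral.integral_comp_sub_left (a := 0) (b := 2 * π)
      (fun t => sin (m * t) * g t) (2 * π)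
    simp only [sub_self, sub_zero, mul_sub, sin_nat_mul_two_pi_sub, hper.sub_eq', heven _,
      neg_mul, intervalIntegral.integral_neg] at reflect
    linarith
  calc ∫ t in (0 : ℝ)..2 * π, (g (t - φ) : ℂ) * Complex.exp (I * m * t)
      = ∫ t in (0 : ℝ)..2 * π, (g t : ℂ) * Complex.exp (I * m * (t + φ : ℝ)) := by
        have shift := per.intervalIntegral_add_eq (0 - φ) 0
        rw [zero_add, show 0 - φ + 2 * π = 2 * π - φ by ring,
          ← intervalIntegral.integral_comp_sub_right] at shift
        simpa only [sub_add_cancel] using shift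
    _ = _ := by
        simp only [split]
        rw [intervalIntegral.integral_const_mul, intervalIntegral.integral_add,
          intervalIntegral.integral_mul_const, intervalIntegral.integral_ofReal,
          intervalIntegral.integral_ofReal, odd, Complex.ofReal_zero, zero_mul, add_zero] <;>
        exact Continuous.intervalIntegrable (by fun_prop) _ _

lemma hasDerivAt_sin_pow_mul_iterate_derivative_T (m k : ℕ) (τ : ℝ) :
    HasDerivAt (fun τ => sin τ ^ (2 * k + 1)
        * (derivative^[k + 1] (Polynomial.Chebyshev.T ℝ m)).eval (cos τ))
      (((m : ℝ) ^ 2 - k ^ 2)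
        * (sin τ ^ (2 * k) * (derivative^[k] (Polynomial.Chebyshev.T ℝ m)).eval (cos τ))) τ := by
  have ode := Polynomial.Chebyshev.one_sub_X_sq_mul_iterate_derivative_T_eval (R := ℝ) m k (cos τ)
  rw [← sin_sq] at ode
  refine (((hasDerivAt_sin τ).pow (2 * k + 1)).mul
    ((hasDerivAt_eval_iterate_derivative _ (k + 1) (cos τ)).comp τ
      (hasDerivAt_cos τ))).congr_deriv ?_
  simp only [Function.comp_apply, Nat.add_sub_cancel, Pi.pow_apply]
  push_cast at ode ⊢
  linear_combination -sin τ ^ (2 * k) * ode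

variable {F : ℕ → ℝ → ℝ}

lemma integral_iterate_derivative_T_succ (m : ℕ)
    (hF : ∀ k, ∀ x ∈ Set.Icc (-1 : ℝ) 1, HasDerivAt (F k) (F (k + 1) x) x) (k : ℕ) :
    ((m : ℝ) ^ 2 - k ^ 2) * ∫ τ in (0 : ℝ)..2 * π, sin τ ^ (2 * k)
        * (derivative^[k] (Polynomial.Chebyshev.T ℝ m)).eval (cos τ) * F k (cos τ)
      = ∫ τ in (0 : ℝ)..2 * π, sin τ ^ (2 * (k + 1))
        * (derivative^[k + 1] (Polynomial.Chebyshev.T ℝ m)).eval (cos τ) * F (k + 1) (cos τ) := by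
  have hu (τ : ℝ) := (hF k _ (cos_mem_Icc τ)).comp τ (hasDerivAt_cos τ)
  have cF : Continuous fun τ => F (k + 1) (cos τ) := continuous_iff_continuousAt.2 fun τ =>
    (hF (k + 1) _ (cos_mem_Icc τ)).continuousAt.comp continuous_cos.continuousAt
  have parts := intervalIntegral.integral_mul_deriv_eq_deriv_mul (a := 0) (b := 2 * π)
    (fun τ _ => hu τ) (fun τ _ => hasDerivAt_sin_pow_mul_iterate_derivative_T m k τ)
    ((cF.mul continuous_sin.neg).intervalIntegrable _ _)
    (Continuous.intervalIntegrable (by fun_prop) _ _)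
  have zero : (0 : ℝ) ^ (2 * k + 1) = 0 := zero_pow (by omega)
  simp only [sin_two_pi, sin_zero, zero, zero_mul, mul_zero, sub_zero, zero_sub] at parts
  rw [← intervalIntegral.integral_neg] at parts
  rw [← intervalIntegral.integral_const_mul]
  convert parts using 1
  · refine intervalIntegral.integral_congr fun τ _ => ?_
    simp only [Function.comp_apply]
    ring
  · refine intervalIntegral.integral_congr fun τ _ => ?_
    ring

/- Repeated integration by parts, with Chebyshev's differential equation cancelling the lower
order terms, moves the oscillation of `cos (m τ)` into a positive power of `sin τ`. -/
lemma integral_cos_nat_mul_mul_comp_cos (m : ℕ)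
    (hF : ∀ k, ∀ x ∈ Set.Icc (-1 : ℝ) 1, HasDerivAt (F k) (F (k + 1) x) x) :
    (∏ l ∈ Finset.range m, (2 * (l : ℝ) + 1)) * ∫ τ in (0 : ℝ)..2 * π, cos (m * τ) * F 0 (cos τ)
      = ∫ τ in (0 : ℝ)..2 * π, sin τ ^ (2 * m) * F m (cos τ) := by
  have lift (k : ℕ) : (∏ l ∈ Finset.range k, ((m : ℝ) ^ 2 - l ^ 2))
        * ∫ τ in (0 : ℝ)..2 * π, cos (m * τ) * F 0 (cos τ)
      = ∫ τ in (0 : ℝ)..2 * π, sin τ ^ (2 * k)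
        * (derivative^[k] (Polynomial.Chebyshev.T ℝ m)).eval (cos τ) * F k (cos τ) := by
    induction k with
    | zero => simp
    | succ k ih =>
      rw [Finset.prod_range_succ, mul_right_comm, ih, mul_comm,
        integral_iterate_derivative_T_succ m hF k]
  obtain ⟨c, hc⟩ : ∃ c, Polynomial.C c = derivative^[m] (Polynomial.Chebyshev.T ℝ m) :=
    Polynomial.natDegree_eq_zero.1 <| Nat.le_zero.1 <|
      (Polynomial.natDegree_iterate_derivative _ m).trans (by simp)
  have hprod : (∏ l ∈ Finset.range m, (2 * (l : ℝ) + 1)) * c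
      = ∏ l ∈ Finset.range m, ((m : ℝ) ^ 2 - l ^ 2) := by
    simpa [← hc] using Polynomial.Chebyshev.iterate_derivative_T_eval_one (R := ℝ) m m
  have hne : c ≠ 0 := by
    refine right_ne_zero_of_mul (hprod ▸ Finset.prod_ne_zero_iff.2 fun l hl => ?_)
    have : (l : ℝ) < m := by exact_mod_cast Finset.mem_range.1 hl
    nlinarith [l.cast_nonneg (α := ℝ)]
  have top := lift m
  simp only [← hprod, ← hc, Polynomial.eval_C, mul_right_comm _ c,
    intervalIntegral.integral_mul_const] at top
  exact mul_right_cancel₀ hne top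

lemma integral_cos_nat_mul_mul_rpow (m : ℕ) {A B : ℝ}
    (hpos : ∀ x ∈ Set.Icc (-1 : ℝ) 1, 0 < A - 2 * B * x) :
    ∫ τ in (0 : ℝ)..2 * π, cos (m * τ) * (A - 2 * B * cos τ) ^ (-(1 / 2) : ℝ)
      = B ^ m * ∫ τ in (0 : ℝ)..2 * π,
          sin τ ^ (2 * m) * (A - 2 * B * cos τ) ^ (-(m + 1 / 2) : ℝ) := by
  have key := integral_cos_nat_mul_mul_comp_cos m (F := fun k x =>
    (∏ l ∈ Finset.range k, (2 * (l : ℝ) + 1)) * B ^ k * (A - 2 * B * x) ^ (-(k + 1 / 2) : ℝ))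
    fun k x hx => by
      have lin : HasDerivAt (fun x => A - 2 * B * x) (-(2 * B)) x := by
        simpa using ((hasDerivAt_id x).const_mul (2 * B)).const_sub A
      refine ((lin.rpow_const (Or.inl (hpos x hx).ne')).const_mul _).congr_deriv ?_
      rw [Finset.prod_range_succ]
      push_cast
      ring_nf
  have hne : ∏ l ∈ Finset.range m, (2 * (l : ℝ) + 1) ≠ 0 :=
    Finset.prod_ne_zero_iff.2 fun l _ => by positivity
  refine mul_left_cancel₀ hne ?_
  simp only [Finset.range_zero, Finset.prod_empty, pow_zero, one_mul, Nat.cast_zero, zero_add]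
    at key
  rw [key, ← mul_assoc, ← intervalIntegral.integral_const_mul]
  simp only [mul_left_comm]

lemma integral_axialKernel_mul_exp (m : ℕ) {β α η θ : ℝ} (φ : ℝ)
    (hZ : ∀ τ, 0 < sqDist β α η θ τ) :
    ∫ t in (0 : ℝ)..2 * π, (axialKernel 0 β α η θ (t - φ) : ℂ) * Complex.exp (I * m * t)
      = Complex.exp (I * m * φ) * ((sinh β * sin α * (sinh η * sin θ)) ^ m
        * ∫ τ in (0 : ℝ)..2 * π, axialKernel m β α η θ τ : ℝ) := by
  have expand (τ : ℝ) : sqDist β α η θ τ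
      = sinh β ^ 2 + cos α ^ 2 + (sinh η ^ 2 + cos θ ^ 2)
        - 2 * (cosh β * cos α) * (cosh η * cos θ)
        - 2 * (sinh β * sin α * (sinh η * sin θ)) * cos τ := by
    unfold sqDist
    ring
  have hpos (x : ℝ) (hx : x ∈ Set.Icc (-1 : ℝ) 1) :=
    cos_arccos hx.1 hx.2 ▸ expand _ ▸ hZ (arccos x)
  rw [integral_comp_sub_mul_exp m φ (g := axialKernel 0 β α η θ)]
  · simp only [axialKernel, expand, mul_zero, pow_zero, one_mul, Nat.cast_zero, zero_add]
    rw [integral_cos_nat_mul_mul_rpow m hpos]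
  · exact continuousOn_univ.1 (continuousOn_axialKernel (by fun_prop) (by fun_prop) (by fun_prop)
      (by fun_prop) fun τ _ => (hZ τ).ne')
  · intro τ
    simp only [axialKernel, expand, sin_add_two_pi, cos_add_two_pi]
  · intro τ
    simp only [axialKernel, expand, mul_zero, pow_zero, cos_neg]

end FourierModes

section SpheroidGeometry

variable {a w s t : ℝ}

lemma sqrt_one_sub_cos_sq {θ : ℝ} (hθ : θ ∈ Set.Icc 0 π) : √(1 - cos θ ^ 2) = sin θ := by
  rw [← sin_sq, sqrt_sq (sin_nonneg_of_mem_Icc hθ)]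

lemma sqrt_cosh_sq_sub_one {η : ℝ} (hη : 0 ≤ η) : √(cosh η ^ 2 - 1) = sinh η := by
  rw [cosh_sq, add_sub_cancel_right, sqrt_sq (sinh_nonneg_iff.2 hη)]

lemma hasDerivAt_prolate (hw : w ^ 2 - 1 ≠ 0) : HasDerivAt (fun w => prolate a w s t)
    ((WithLp.equiv 2 (Fin 3 → ℝ)).symm ![a * (w / √(w ^ 2 - 1)) * √(1 - s ^ 2) * cos t,
      a * (w / √(w ^ 2 - 1)) * √(1 - s ^ 2) * sin t, a * s]) w := by
  have hsqrt : HasDerivAt (fun w : ℝ => √(w ^ 2 - 1)) (w / √(w ^ 2 - 1)) w := by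
    refine (((hasDerivAt_pow 2 w).sub_const 1).sqrt hw).congr_deriv ?_
    simp [mul_div_mul_left]
  have coords : HasDerivAt (fun w => ![a * √(w ^ 2 - 1) * √(1 - s ^ 2) * cos t,
      a * √(w ^ 2 - 1) * √(1 - s ^ 2) * sin t, a * w * s])
      ![a * (w / √(w ^ 2 - 1)) * √(1 - s ^ 2) * cos t,
        a * (w / √(w ^ 2 - 1)) * √(1 - s ^ 2) * sin t, a * s] w := by
    refine hasDerivAt_pi.2 fun i => ?_
    fin_cases i
    · exact ((hsqrt.const_mul a).mul_const _).mul_const _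
    · exact ((hsqrt.const_mul a).mul_const _).mul_const _
    · simpa using ((hasDerivAt_id w).const_mul a).mul_const s
  exact (PiLp.continuousLinearEquiv 2 ℝ fun _ : Fin 3 => ℝ).symm.hasFDerivAt.comp_hasDerivAt w
    coords

lemma norm_deriv_prolate (ha : 0 ≤ a) (hw : 1 < w) (hs : s ∈ Set.Icc (-1) 1) :
    ‖deriv (fun w => prolate a w s t) w‖ = a * √(w ^ 2 - s ^ 2) / √(w ^ 2 - 1) := by
  have hw' : 0 < w ^ 2 - 1 := by nlinarith
  have hs' : 0 ≤ 1 - s ^ 2 := by nlinarith [hs.1, hs.2]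
  rw [(hasDerivAt_prolate hw'.ne').deriv, EuclideanSpace.norm_eq,
    sqrt_eq_iff_mul_self_eq (by positivity) (by positivity)]
  simp only [Fin.sum_univ_three, WithLp.equiv_symm_apply, Matrix.cons_val, norm_eq_abs, sq_abs,
    ← pow_two, mul_pow, div_pow, sq_sqrt hw'.le, sq_sqrt hs', sin_sq,
    sq_sqrt (show 0 ≤ w ^ 2 - s ^ 2 by linarith)]
  field_simp
  ring

variable {β α η θ φ : ℝ}

lemma norm_prolate_sub_prolate_sq (hβ : 0 ≤ β) (hη : 0 ≤ η) (hα : α ∈ Set.Icc 0 π)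
    (hθ : θ ∈ Set.Icc 0 π) :
    ‖prolate a (cosh β) (cos α) φ - prolate a (cosh η) (cos θ) t‖ ^ 2
      = a ^ 2 * sqDist β α η θ (t - φ) := by
  rw [EuclideanSpace.norm_sq_eq]
  simp only [prolate, Fin.sum_univ_three, WithLp.equiv_symm_apply, PiLp.sub_apply, Matrix.cons_val,
    norm_eq_abs, sq_abs, sqrt_one_sub_cos_sq, sqrt_cosh_sq_sub_one, hβ, hη, hα, hθ, sqDist, cos_sub]
  grind [sin_sq_add_cos_sq φ, sin_sq_add_cos_sq t, sin_sq_add_cos_sq α, sin_sq_add_cos_sq θ,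
    cosh_sq β, cosh_sq η]

lemma inner_deriv_prolate (hβ : 0 ≤ β) (hη : 0 < η) (hα : α ∈ Set.Icc 0 π)
    (hθ : θ ∈ Set.Icc 0 π) :
    inner ℝ (deriv (fun w => prolate a w (cos θ) t) (cosh η))
        (prolate a (cosh β) (cos α) φ - prolate a (cosh η) (cos θ) t)
      = -(a ^ 2 * sqDistEta β α η θ (t - φ)) / (2 * sinh η) := by
  have hsinh := sinh_pos_iff.2 hη
  have hw : cosh η ^ 2 - 1 ≠ 0 := by
    rw [cosh_sq, add_sub_cancel_right]
    exact pow_ne_zero 2 hsinh.ne'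
  have prolate_deriv : HasDerivAt (fun w => prolate a w (cos θ) t) _ (cosh η) :=
    (hasDerivAt_prolate hw).differentiableAt.hasDerivAt
  have dist_deriv := ((prolate_deriv.scomp η (hasDerivAt_cosh η)).const_sub
    (prolate a (cosh β) (cos α) φ)).norm_sq
  have sqDist_deriv := (hasDerivAt_sqDist_eta β α η θ (t - φ)).const_mul (a ^ 2)
  have same := dist_deriv.unique (sqDist_deriv.congr_of_eventuallyEq ?_)
  · rw [eq_div_iff (mul_pos two_pos hsinh).ne', ← neg_eq_iff_eq_neg, ← same, inner_neg_right,
      inner_smul_right, real_inner_comm]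
    simp only [Function.comp_apply]
    ring
  · filter_upwards [lt_mem_nhds hη] with y hy
    exact norm_prolate_sub_prolate_sq hβ hy.le hα hθ

/- The double layer kernel times the area element is, up to the factor `sinh η / (4 π)`, the
`η`-derivative of the Newtonian kernel. -/
lemma doubleLayer_kernel_eq (ha : 0 < a) (hβ : 0 ≤ β) (hη : 0 < η) (hα : α ∈ Set.Icc 0 π)
    (hθ : θ ∈ Set.Icc 0 π) (hZ : 0 < sqDist β α η θ (t - φ)) :
    inner ℝ (unitNormalP a (cosh η) (cos θ) t)
        (prolate a (cosh β) (cos α) φ - prolate a (cosh η) (cos θ) t)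
      / (4 * π * ‖prolate a (cosh β) (cos α) φ - prolate a (cosh η) (cos θ) t‖ ^ 3)
      * areaElemP a (cosh η) (cos θ)
      = sinh η / (4 * π) * axialKernelEta 0 β α η θ (t - φ) := by
  have hcosh := one_lt_cosh.2 hη.ne'
  have hnorm : ‖prolate a (cosh β) (cos α) φ - prolate a (cosh η) (cos θ) t‖
      = a * √(sqDist β α η θ (t - φ)) := by
    rw [← pow_left_inj₀ (norm_nonneg _) (by positivity) two_ne_zero, mul_pow, sq_sqrt hZ.le,
      norm_prolate_sub_prolate_sq hβ hη.le hα hθ]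
  have hpow : sqDist β α η θ (t - φ) ^ (-((0 : ℕ) + 1 / 2) - 1 : ℝ)
      = (√(sqDist β α η θ (t - φ)) ^ 3)⁻¹ := by
    rw [sqrt_eq_rpow, ← rpow_mul_natCast hZ.le, ← rpow_neg hZ.le]
    norm_num
  have hwidth : 0 < √(cosh η ^ 2 - cos θ ^ 2) :=
    sqrt_pos.2 (by nlinarith [cos_sq_le_one θ])
  rw [unitNormalP, inner_smul_left, norm_deriv_prolate ha.le hcosh (cos_mem_Icc θ),
    inner_deriv_prolate hβ hη hα hθ, hnorm, areaElemP, axialKernelEta, rpowDeriv, hpow,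
    sqrt_cosh_sq_sub_one hη.le, conj_trivial]
  have := sqrt_pos.2 hZ
  field_simp
  simp

end SpheroidGeometry

section LayerPotentials

open Polynomial (derivative)

/-- The Newtonian potential `∫∫ ‖x - Φ(cosh η, s, t)‖⁻¹ μ(s, t) ds dt` at `x = Φ(cosh β, cos α, φ)`
of the density `μ` spread over a spheroid, for `a = 1` and in the variable `θ` with `s = cos θ`. -/
def newtonPotential (μ : ℝ → ℝ → ℂ) (β α φ η : ℝ) : ℂ :=
  ∫ q in Set.Icc 0 π ×ˢ Set.Icc 0 (2 * π),
    (axialKernel 0 β α η q.1 (q.2 - φ) : ℂ) * (sin q.1 * μ (cos q.1) q.2)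

section ContinuousDensity

variable {μ : ℝ → ℝ → ℂ} {β η : ℝ}

lemma hasDerivAt_newtonPotential (hμ : Continuous fun q : ℝ × ℝ => μ q.1 q.2) (α φ : ℝ)
    (hη : |η| < |β|) : HasDerivAt (newtonPotential μ β α φ)
      (∫ q in Set.Icc 0 π ×ˢ Set.Icc 0 (2 * π),
        (axialKernelEta 0 β α η q.1 (q.2 - φ) : ℂ) * (sin q.1 * μ (cos q.1) q.2)) η := by
  have hZ (q : ℝ × ℝ × ℝ) (hq : q ∈ Set.Ioo (-|β|) |β| ×ˢ (Set.Icc 0 π ×ˢ Set.Icc 0 (2 * π))) :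
      sqDist β α q.1 q.2.1 (q.2.2 - φ) ≠ 0 := (sqDist_pos _ _ _ (abs_lt.2 hq.1).ne).ne'
  have cμ : ContinuousOn (fun q : ℝ × ℝ × ℝ => (sin q.2.1 : ℂ) * μ (cos q.2.1) q.2.2)
      (Set.Ioo (-|β|) |β| ×ˢ (Set.Icc 0 π ×ˢ Set.Icc 0 (2 * π))) := by
    have := hμ.comp (f := fun q : ℝ × ℝ × ℝ => (cos q.2.1, q.2.2)) (by fun_prop)
    exact Continuous.continuousOn (by fun_prop)
  refine hasDerivAt_setIntegral_of_continuousOn (μ := volume) (isCompact_Icc.prod isCompact_Icc)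
    isOpen_Ioo
    (F := fun η q => (axialKernel 0 β α η q.1 (q.2 - φ) : ℂ) * (sin q.1 * μ (cos q.1) q.2))
    (F' := fun η q => (axialKernelEta 0 β α η q.1 (q.2 - φ) : ℂ) * (sin q.1 * μ (cos q.1) q.2))
    ((Complex.continuous_ofReal.comp_continuousOn
      (continuousOn_axialKernel ?_ ?_ ?_ ?_ hZ)).mul cμ)
    ((Complex.continuous_ofReal.comp_continuousOn
      (continuousOn_axialKernelEta ?_ ?_ ?_ ?_ hZ)).mul cμ)
    (fun η hη q hq => (hasDerivAt_axialKernel_eta (hZ (η, q) ⟨hη, hq⟩)).ofReal_comp.mul_const _)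
    (abs_lt.1 hη) <;> fun_prop

lemma doubleLayerP_eq {a α : ℝ} (ha : 0 < a) (hμ : Continuous fun q : ℝ × ℝ => μ q.1 q.2)
    (hα : α ∈ Set.Icc 0 π) (φ : ℝ) (hη : 0 < η) (hβ : η < β) :
    doubleLayerP a (cosh η) μ (prolate a (cosh β) (cos α) φ) = (sinh η / (4 * π) : ℝ)
      * ∫ q in Set.Icc 0 π ×ˢ Set.Icc 0 (2 * π),
        (axialKernelEta 0 β α η q.1 (q.2 - φ) : ℂ) * (sin q.1 * μ (cos q.1) q.2) := by
  have hβ0 := hη.trans hβ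
  have hZ (θ τ : ℝ) : 0 < sqDist β α η θ τ :=
    sqDist_pos _ _ _ (by rw [abs_of_pos hη, abs_of_pos hβ0]; exact hβ.ne)
  have kernel (t : ℝ) {θ : ℝ} (hθ : θ ∈ Set.Icc 0 π) :=
    doubleLayer_kernel_eq (t := t) (φ := φ) ha hβ0.le hη hα hθ (hZ _ _)
  have cont : Continuous fun q : ℝ × ℝ => axialKernelEta 0 β α η q.1 (q.2 - φ) :=
    continuousOn_univ.1 (continuousOn_axialKernelEta (by fun_prop) (by fun_prop) (by fun_prop)
      (by fun_prop) fun _ _ => (hZ _ _).ne')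
  have cμ := hμ.comp (f := fun q : ℝ × ℝ => (cos q.1, q.2)) (by fun_prop)
  rw [doubleLayerP, setIntegral_Icc_prod_Icc_swap pi_pos.le two_pi_pos.le
    (f := fun θ t => (axialKernelEta 0 β α η θ (t - φ) : ℂ) * (sin θ * μ (cos θ) t))
    (Continuous.continuousOn ((Complex.continuous_ofReal.comp cont).mul
      (.mul (by fun_prop) cμ))), ← intervalIntegral.integral_const_mul]
  refine intervalIntegral.integral_congr fun t _ => ?_
  rw [← integral_sin_smul_comp_cos, ← intervalIntegral.integral_const_mul]
  · refine intervalIntegral.integral_congr fun θ hθ => ?_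
    rw [Set.uIcc_of_le pi_pos.le] at hθ
    simp only [kernel t hθ, Complex.real_smul]
    push_cast
    ring
  · have cs : Continuous fun s => axialKernelEta 0 β α η (arccos s) (t - φ) :=
      cont.comp (f := fun s => (arccos s, t)) (by fun_prop)
    have cμs : Continuous fun s => μ s t := hμ.comp (by fun_prop : Continuous fun s : ℝ => (s, t))
    have cprod : Continuous fun s =>
        ((sinh η / (4 * π) * axialKernelEta 0 β α η (arccos s) (t - φ) : ℝ) : ℂ) * μ s t := by
      fun_prop
    refine cprod.continuousOn.congr fun s hs => ?_
    have kernel_s := kernel t ⟨arccos_nonneg s, arccos_le_pi s⟩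
    rw [cos_arccos hs.1 hs.2] at kernel_s
    rw [kernel_s]

end ContinuousDensity

variable {n m : ℕ} {α β η : ℝ}

lemma continuous_sphY : Continuous fun q : ℝ × ℝ => sphY n m q.1 q.2 := by
  unfold sphY ferrersP
  simp only [iteratedDeriv_legendreP]
  fun_prop

lemma ferrersP_cos (hα : α ∈ Set.Icc 0 π) :
    ferrersP n m (cos α) = sin α ^ m * (derivative^[m] (legendrePoly n)).eval (cos α) := by
  rw [ferrersP, iteratedDeriv_legendreP, sqrt_one_sub_cos_sq hα]

lemma assocP_cosh (hη : 0 ≤ η) :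
    assocP n m (cosh η) = sinh η ^ m * (derivative^[m] (legendrePoly n)).eval (cosh η) := by
  rw [assocP, iteratedDeriv_legendreP, sqrt_cosh_sq_sub_one hη]

lemma differentiableAt_assocP {x : ℝ} (hx : x ^ 2 - 1 ≠ 0) : DifferentiableAt ℝ (assocP n m) x := by
  unfold assocP
  rw [iteratedDeriv_legendreP]
  have hsqrt : DifferentiableAt ℝ (fun x : ℝ => √(x ^ 2 - 1)) x :=
    DifferentiableAt.sqrt (by fun_prop) hx
  exact (hsqrt.pow m).mul (Polynomial.differentiable _ x)

lemma newtonPotential_sphY_eq_axialIntegral (φ : ℝ) (h : |η| ≠ |β|) :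
    newtonPotential (sphY n m) β α φ η
      = (√((2 * n + 1) / (4 * π)) * √((n - m).factorial / (n + m).factorial)
          * (sinh β * sin α * sinh η) ^ m * axialIntegral n m β α η : ℝ)
        * Complex.exp (Complex.I * m * φ) := by
  have hZ (θ τ : ℝ) := sqDist_pos (β := β) (η := η) α θ τ h
  have cont (k : ℕ) {ψ : ℝ} : Continuous fun q : ℝ × ℝ => axialKernel k β α η q.1 (q.2 - ψ) :=
    continuousOn_univ.1 (continuousOn_axialKernel (by fun_prop) (by fun_prop) (by fun_prop)
      (by fun_prop) fun _ _ => (hZ _ _).ne')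
  have cY := (continuous_sphY (n := n) (m := m)).comp (f := fun q : ℝ × ℝ => (cos q.1, q.2))
    (by fun_prop)
  have cK := cont m (ψ := 0)
  simp only [sub_zero] at cK
  have fubini := setIntegral_Icc_prod_Icc pi_pos.le two_pi_pos.le
    (f := fun θ t => (axialKernel 0 β α η θ (t - φ) : ℂ) * (sin θ * sphY n m (cos θ) t))
    (((Complex.continuous_ofReal.comp (cont 0)).mul
      (Continuous.mul (by fun_prop) cY)).continuousOn)
  have fubini' := setIntegral_Icc_prod_Icc pi_pos.le two_pi_pos.le
    (f := fun θ τ => sin θ ^ (2 * m + 1) * (derivative^[m] (legendrePoly n)).eval (cos θ)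
      * axialKernel m β α η θ τ) (Continuous.mul (by fun_prop) cK).continuousOn
  rw [newtonPotential, fubini, axialIntegral, fubini', ← intervalIntegral.integral_const_mul,
    ← intervalIntegral.integral_ofReal, ← intervalIntegral.integral_mul_const]
  refine intervalIntegral.integral_congr fun θ hθ => ?_
  rw [Set.uIcc_of_le pi_pos.le] at hθ
  have regroup (t : ℝ) : (axialKernel 0 β α η θ (t - φ) : ℂ) * (sin θ * sphY n m (cos θ) t)
      = (sin θ * (√((2 * n + 1) / (4 * π)) * √((n - m).factorial / (n + m).factorial)
          * ferrersP n m (cos θ)) : ℝ)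
        * ((axialKernel 0 β α η θ (t - φ) : ℂ) * Complex.exp (Complex.I * m * t)) := by
    rw [sphY]
    push_cast
    ring
  simp only [regroup, intervalIntegral.integral_const_mul]
  rw [integral_axialKernel_mul_exp m φ (hZ θ), ferrersP_cos hθ]
  push_cast
  ring

lemma newtonPotential_sphY (hm : m ≤ n) (hα : α ∈ Set.Ioo 0 π) (φ : ℝ) (hη : 0 < η) (hβ : η < β) :
    newtonPotential (sphY n m) β α φ η
      = (4 * π * (-1) ^ m * ((n - m).factorial / (n + m).factorial) * assocQ n m (cosh β)
          * assocP n m (cosh η) : ℝ) * sphY n m (cos α) φ := by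
  have hβ0 := hη.trans hβ
  rw [newtonPotential_sphY_eq_axialIntegral φ (by rw [abs_of_pos hη, abs_of_pos hβ0]; exact hβ.ne),
    axialIntegral_eq hm hα hη hβ, sphY, ferrersP_cos ⟨hα.1.le, hα.2.le⟩, assocP_cosh hη.le, assocQ,
    sqrt_cosh_sq_sub_one hβ0.le]
  push_cast
  ring

end LayerPotentials

theorem doubleLayer_exterior_eval (a : ℝ) (ha : 0 < a) (u₀ : ℝ) (hu₀ : 1 < u₀)
    (n m : ℕ) (hm : m ≤ n) (u v φ : ℝ) (hu : u₀ < u) (hv : v ∈ Set.Ioo (-1 : ℝ) 1) :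
    doubleLayerP a u₀ (fun s t => sphY n m s t) (prolate a u v φ) =
      (((((n - m).factorial : ℝ) / ((n + m).factorial : ℝ)) * (-1 : ℝ) ^ m * (u₀ ^ 2 - 1) *
          deriv (assocP n m) u₀ * assocQ n m u : ℝ) : ℂ) * sphY n m v φ := by
  obtain ⟨η, hη, rfl⟩ : ∃ η, 0 < η ∧ cosh η = u₀ :=
    ⟨arcosh u₀, arcosh_pos hu₀, cosh_arcosh hu₀.le⟩
  obtain ⟨β, hβ, rfl⟩ : ∃ β, η < β ∧ cosh β = u := by
    refine ⟨arcosh u, ?_, cosh_arcosh (hu₀.trans hu).le⟩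
    rwa [← arcosh_cosh hη.le, arcosh_lt_arcosh (one_pos.trans hu₀) (one_pos.trans (hu₀.trans hu))]
  obtain ⟨α, hα, rfl⟩ : ∃ α ∈ Set.Ioo 0 π, cos α = v :=
    ⟨arccos v, ⟨arccos_pos.2 hv.2, arccos_lt_pi.2 hv.1⟩, cos_arccos hv.1.le hv.2.le⟩
  have hβ0 := hη.trans hβ
  have direct := hasDerivAt_newtonPotential (continuous_sphY (n := n) (m := m)) α φ
    (show |η| < |β| by rwa [abs_of_pos hη, abs_of_pos hβ0])
  have assocP_deriv : HasDerivAt (assocP n m) _ (cosh η) :=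
    (differentiableAt_assocP (by nlinarith)).hasDerivAt
  have explicit := (((assocP_deriv.comp η (hasDerivAt_cosh η)).const_mul
    (4 * π * (-1) ^ m * ((n - m).factorial / (n + m).factorial)
      * assocQ n m (cosh β))).ofReal_comp).mul_const (sphY n m (cos α) φ)
  have same := direct.unique (explicit.congr_of_eventuallyEq ?_)
  · rw [doubleLayerP_eq ha continuous_sphY ⟨hα.1.le, hα.2.le⟩ φ hη hβ, same, cosh_sq,
      add_sub_cancel_right]
    push_cast
    field_simp
  · filter_upwards [Ioo_mem_nhds hη hβ] with y hy
    exact newtonPotential_sphY hm hα φ hy.1 hy.2
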